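/- Let Γ be a regular nicely distance-balanced graph with valency k = 4, diameter d ≥ 3 and γ(Γ) = d+1. Then Γ is isomorphic to the line graph of the 3-dimensional hypercube graph Q_3 (where Q_3 is the graph on the 8 binary strings of length 3, two strings being adjacent if they differ in exactly one coordinate, and the line graph has the edges of Q_3 as vertices, two edges being adjacent when they share an endpoint). -/

import Mathlib

open SimpleGraph Finset

/-- `W_{u,v}`: the set of vertices strictly closer to `u` than to `v`. -/
noncomputable def ndbW {V : Type*} [Fintype V] (G : SimpleGraph V) (u v : V) : Finset V :=
  Finset.univ.filter fun x => G.dist x u < G.dist x v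

/-- `D^i_j(u,v)`: the set of vertices at distance `i` from `u` and `j` from `v`. -/
noncomputable def ndbD {V : Type*} [Fintype V] (G : SimpleGraph V) (u v : V) (i j : ℕ) : Finset V :=
  Finset.univ.filter fun x => G.dist x u = i ∧ G.dist x v = j

/-- `G` is nicely distance-balanced with constant `γ`. -/
def IsNDB {V : Type*} [Fintype V] (G : SimpleGraph V) (γ : ℕ) : Prop :=
  ∀ u v : V, G.Adj u v → (ndbW G u v).card = γ ∧ (ndbW G v u).card = γ

/-- `G` has diameter `d`. -/
def HasDiam {V : Type*} [Fintype V] (G : SimpleGraph V) (d : ℕ) : Prop :=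
  (∀ u v : V, G.dist u v ≤ d) ∧ ∃ u v : V, G.dist u v = d

/-- The 3-dimensional hypercube graph `Q₃`: vertices are binary strings of
length 3, two strings being adjacent iff they differ in exactly one
coordinate. -/
def cubeQ3 : SimpleGraph (Fin 3 → Bool) :=
  SimpleGraph.fromRel fun x y => (Finset.univ.filter fun i => x i ≠ y i).card = 1

/-!
Let `f` be a geodesic of length `d`. Each edge `f i, f (i + 1)` has `γ = d + 1` vertices on either
side, and `i + 1` and `d - i` of them lie on `f`, so few vertices off `f` can be closer to one end
than to the other. If `d ≥ 4`, this forbids a neighbour of `f 2` that is closer neither to `f 1`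
than to `f 0` nor to `f (d - 1)` than to `f d`: for `d ≥ 5` by counting, and for `d = 4` because
such a vertex closes up a ladder of two geodesics in which some degree exceeds four. The further
neighbours of the `f j` then fit only if `d = 4`, where two adjacent twins contradict `γ ≥ 2`. So
`d = 3`.

For `d = 3` and an edge `u v`, the vertices at distance three from `u` and two from `v` are as many
as the common neighbours of `u` and `v`. This excludes `K₄` and then edges in two triangles, so that
every edge lies in exactly one triangle and every vertex `x` has exactly one vertex `z` at distance
three. The neighbours of `x`, those of `z` and the remaining vertices are then forced into the
pattern of the twelve edges of the cube.
-/

section Counting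

variable {α : Type*} {s : Finset α} {l : List α}

theorem length_le_card_of_forall_mem (hl : l.Nodup) (h : ∀ z ∈ l, z ∈ s) : l.length ≤ s.card := by
  classical
  rw [← List.toFinset_card_of_nodup hl]
  exact card_le_card fun z hz => h z (List.mem_toFinset.1 hz)

theorem mem_list_of_card_le_length (hl : l.Nodup) (h : ∀ z ∈ l, z ∈ s) (hs : s.card ≤ l.length)
    {z : α} (hz : z ∈ s) : z ∈ l := by
  by_contra hzl
  have := length_le_card_of_forall_mem (l := z :: l) (List.nodup_cons.2 ⟨hzl, hl⟩)
    (List.forall_mem_cons.2 ⟨hz, h⟩)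
  grind

theorem exists_mem_notMem_of_length_lt_card (h : l.length < s.card) : ∃ z ∈ s, z ∉ l := by
  classical
  obtain ⟨z, hz, hzl⟩ := exists_mem_notMem_of_card_lt_card
    ((List.toFinset_card_le l).trans_lt h)
  exact ⟨z, hz, fun hm => hzl (List.mem_toFinset.2 hm)⟩

end Counting

/-- `IsNbhd G v l`: the list `l` enumerates the neighbours of `v` without repetition. Lists keep
small explicit neighbourhoods readable. -/
def IsNbhd {V : Type*} (G : SimpleGraph V) (v : V) (l : List V) : Prop :=
  l.Nodup ∧ ∀ z, G.Adj v z ↔ z ∈ l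

namespace IsNbhd

variable {V : Type*} {G : SimpleGraph V} {v a b c e : V} {l l' : List V}

theorem perm (hv : IsNbhd G v l) (hl : l.Perm l') : IsNbhd G v l' :=
  ⟨hl.nodup_iff.1 hv.1, fun z => (hv.2 z).trans hl.mem_iff⟩

theorem swap_first (hv : IsNbhd G v [a, b, c, e]) : IsNbhd G v [b, a, c, e] :=
  hv.perm (.swap ..)

theorem swap_middle (hv : IsNbhd G v [a, b, c, e]) : IsNbhd G v [a, c, b, e] :=
  hv.perm (.cons _ (.swap ..))

theorem swap_last (hv : IsNbhd G v [a, b, c, e]) : IsNbhd G v [a, b, e, c] :=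
  hv.perm (.cons _ (.cons _ (.swap ..)))

theorem self_notMem (hv : IsNbhd G v l) : v ∉ l :=
  fun h => G.irrefl ((hv.2 v).2 h)

theorem adj_last (hv : IsNbhd G v [a, b, c, e]) : G.Adj v e :=
  (hv.2 e).2 (by simp)

end IsNbhd

section Regular

variable {V : Type*} [Fintype V] {G : SimpleGraph V} [DecidableRel G.Adj] {k : ℕ} {l : List V}
  {v a b c : V}

theorem isNbhd_of_length_eq (hreg : G.IsRegularOfDegree k) (hl : l.Nodup)
    (h : ∀ z ∈ l, G.Adj v z) (hk : l.length = k) : IsNbhd G v l := by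
  refine ⟨hl, fun z => ⟨fun hz => ?_, h z⟩⟩
  refine mem_list_of_card_le_length hl (s := G.neighborFinset v) ?_ ?_ ?_
  · simpa using h
  · rw [card_neighborFinset_eq_degree, hreg v, hk]
  · simpa using hz

theorem exists_adj_notMem (hreg : G.IsRegularOfDegree k) (v : V) (hk : l.length < k) :
    ∃ z, G.Adj v z ∧ z ∉ l := by
  have : l.length < (G.neighborFinset v).card := by rwa [card_neighborFinset_eq_degree, hreg v]
  simpa using exists_mem_notMem_of_length_lt_card this

theorem exists_isNbhd_of_three (hreg : G.IsRegularOfDegree 4) (hl : [a, b, c].Nodup)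
    (h : ∀ z ∈ [a, b, c], G.Adj v z) : ∃ e, IsNbhd G v [a, b, c, e] := by
  obtain ⟨e, hve, he⟩ := exists_adj_notMem hreg v (l := [a, b, c]) (by simp)
  exact ⟨e, isNbhd_of_length_eq hreg (by grind) (by grind) rfl⟩

theorem exists_isNbhd_of_two (hreg : G.IsRegularOfDegree 4) (hab : a ≠ b) (ha : G.Adj v a)
    (hb : G.Adj v b) : ∃ c e, IsNbhd G v [a, b, c, e] := by
  obtain ⟨c, hvc, hc⟩ := exists_adj_notMem hreg v (l := [a, b]) (by simp)
  obtain ⟨e, he⟩ := exists_isNbhd_of_three hreg (v := v) (a := a) (b := b) (c := c) (by grind)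
    (by grind)
  exact ⟨c, e, he⟩

theorem length_le_of_forall_adj (hreg : G.IsRegularOfDegree k) (hl : l.Nodup)
    (h : ∀ z ∈ l, G.Adj v z) : l.length ≤ k := by
  rw [← hreg v, ← card_neighborFinset_eq_degree]
  exact length_le_card_of_forall_mem hl (by simpa using h)

end Regular

section Geodesic

variable {V : Type*} {G : SimpleGraph V} {d : ℕ} {f : ℕ → V} {u v w : V}

/-- `IsGeodesic G d f`: the vertices `f 0, …, f d` form a geodesic; the values `f i` with `i > d`
are irrelevant. -/
def IsGeodesic (G : SimpleGraph V) (d : ℕ) (f : ℕ → V) : Prop :=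
  ∀ i j, i ≤ j → j ≤ d → G.dist (f i) (f j) = j - i

theorem dist_le_dist_add_one (hc : G.Connected) (huv : G.Adj u v) (w : V) :
    G.dist u w ≤ G.dist v w + 1 := by
  have : G.dist u w ≤ G.dist u v + G.dist v w := hc.dist_triangle
  rw [dist_eq_one_iff_adj.2 huv] at this
  omega

theorem exists_adj_dist_add_one_eq (hc : G.Connected) (huv : u ≠ v) :
    ∃ s, G.Adj u s ∧ G.dist s v + 1 = G.dist u v := by
  obtain ⟨p, hp⟩ := hc.exists_walk_length_eq_dist u v
  cases p with
  | nil => exact absurd rfl huv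
  | @cons _ s _ hus q =>
    refine ⟨s, hus, ?_⟩
    have hq : G.dist s v ≤ q.length := dist_le q
    have htri : G.dist u v ≤ G.dist u s + G.dist s v := hc.dist_triangle
    rw [dist_eq_one_iff_adj.2 hus] at htri
    rw [Walk.length_cons] at hp
    omega

theorem isGeodesic_of_adj (hc : G.Connected) (hadj : ∀ i < d, G.Adj (f i) (f (i + 1)))
    (hdist : G.dist (f 0) (f d) = d) : IsGeodesic G d f := by
  have hle : ∀ k i, i + k ≤ d → G.dist (f i) (f (i + k)) ≤ k := by
    intro k
    induction k with
    | zero => simp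
    | succ k ih =>
      intro i hi
      have hstep := dist_eq_one_iff_adj.2 (hadj (i + k) (by omega))
      have htri : G.dist (f i) (f (i + k + 1)) ≤ _ := hc.dist_triangle (v := f (i + k))
      have := ih i (by omega)
      rw [← add_assoc]
      omega
  intro i j hij hj
  obtain ⟨k, rfl⟩ := Nat.exists_eq_add_of_le hij
  obtain ⟨m, rfl⟩ := Nat.exists_eq_add_of_le hj
  have hhead := hle i 0 (by omega)
  have hmid := hle k i (by omega)
  have htail := hle m (i + k) le_rfl
  have htri₁ : G.dist (f 0) (f (i + k + m)) ≤ _ := hc.dist_triangle (v := f i)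
  have htri₂ : G.dist (f i) (f (i + k + m)) ≤ _ := hc.dist_triangle (v := f (i + k))
  rw [zero_add] at hhead
  omega

theorem isGeodesic_of_path_four {x₀ x₁ x₂ x₃ x₄ : V} (hc : G.Connected) (h₀₁ : G.Adj x₀ x₁)
    (h₁₂ : G.Adj x₁ x₂) (h₂₃ : G.Adj x₂ x₃) (h₃₄ : G.Adj x₃ x₄) (hd : G.dist x₀ x₄ = 4) :
    IsGeodesic G 4 fun i => [x₀, x₁, x₂, x₃, x₄].getD i x₄ := by
  refine isGeodesic_of_adj hc (fun i hi => ?_) hd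
  interval_cases i <;> assumption

theorem exists_isGeodesic (hc : G.Connected) (u v : V) :
    ∃ f : ℕ → V, f 0 = u ∧ f (G.dist u v) = v ∧ IsGeodesic G (G.dist u v) f := by
  obtain ⟨p, hp⟩ := hc.exists_walk_length_eq_dist u v
  have hlast : p.getVert (G.dist u v) = v := by rw [← hp, p.getVert_length]
  refine ⟨p.getVert, p.getVert_zero, hlast, isGeodesic_of_adj hc (fun i hi => ?_) ?_⟩
  · exact p.adj_getVert_succ (by omega)
  · rw [p.getVert_zero, hlast]

theorem forall_ne_update (hwv : w ≠ v) (hw : ∀ m ≤ d, w ≠ f m) (j : ℕ) :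
    ∀ m ≤ d, w ≠ Function.update f j v m := by
  intro m hm
  rcases eq_or_ne m j with rfl | hne
  · simpa using hwv
  · simpa [hne] using hw m hm

namespace IsGeodesic

theorem adj (hf : IsGeodesic G d f) {i : ℕ} (hi : i + 1 ≤ d) : G.Adj (f i) (f (i + 1)) := by
  have := hf i (i + 1) (by omega) hi
  rw [← dist_eq_one_iff_adj]
  omega

theorem reverse (hf : IsGeodesic G d f) : IsGeodesic G d fun i => f (d - i) := by
  intro i j hij hj
  dsimp only
  rw [dist_comm, hf (d - j) (d - i) (by omega) (by omega)]
  omega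

theorem injOn (hf : IsGeodesic G d f) : Set.InjOn f (Set.Iic d) := by
  intro i hi j hj heq
  rw [Set.mem_Iic] at hi hj
  wlog hij : i ≤ j generalizing i j
  · exact (this hj hi heq.symm (by omega)).symm
  have := hf i j hij hj
  rw [heq, dist_self] at this
  omega

theorem update (hf : IsGeodesic G d f) (hc : G.Connected) {j : ℕ} (hj : j + 2 ≤ d)
    (hl : G.Adj (f j) v) (hr : G.Adj v (f (j + 2))) :
    IsGeodesic G d (Function.update f (j + 1) v) := by
  refine isGeodesic_of_adj hc (fun i hi => ?_) ?_
  · rcases eq_or_ne i j with rfl | hij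
    · simpa using hl
    rcases eq_or_ne i (j + 1) with rfl | hij'
    · simpa using hr
    · simpa [hij, hij'] using hf.adj hi
  · simpa [show d ≠ j + 1 by omega] using hf 0 d (by omega) le_rfl

theorem ne_of_lt_dist_add_dist (hf : IsGeodesic G d f) (hw : G.dist w (f d) < d)
    (hsum : d - 1 < G.dist w (f 1) + G.dist w (f d)) : ∀ m ≤ d, w ≠ f m := by
  rintro m hm rfl
  rw [hf m d hm le_rfl] at hw hsum
  have := hf 1 m (by omega) hm
  rw [dist_comm] at this
  omega

theorem ne_of_adj {j : ℕ} (hf : IsGeodesic G d f) (hj : j ≤ d) (hw : G.Adj (f j) w)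
    (hprev : w ≠ f (j - 1)) (hnext : w ≠ f (j + 1)) : ∀ m ≤ d, w ≠ f m := by
  rintro m hm rfl
  have hdist := dist_eq_one_iff_adj.2 hw
  rcases le_total m j with hmj | hjm
  · rw [SimpleGraph.dist_comm, hf m j hmj hj] at hdist
    exact hprev (by rw [show m = j - 1 by omega])
  · rw [hf j m hjm hm] at hdist
    exact hnext (by rw [show m = j + 1 by omega])

variable [Fintype V]

/-- The successor side of an edge `f j, f (j + 1)` of a geodesic contains the `d - j` later
vertices of the geodesic, so there is room for at most `j + 1` others. -/
theorem length_le_of_closer (hf : IsGeodesic G d f) (hndb : IsNDB G (d + 1)) {j : ℕ}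
    (hj : j + 1 ≤ d) {l : List V} (hl : l.Nodup) (hoff : ∀ z ∈ l, ∀ m ≤ d, z ≠ f m)
    (hcloser : ∀ z ∈ l, G.dist z (f (j + 1)) < G.dist z (f j)) : l.length ≤ j + 1 := by
  have hnodup : (l ++ (List.range (d - j)).map fun i => f (j + 1 + i)).Nodup := by
    refine List.nodup_append'.2 ⟨hl, ?_, ?_⟩
    · refine List.nodup_range.map_on fun i hi i' hi' heq => ?_
      rw [List.mem_range] at hi hi'
      have := hf.injOn (Set.mem_Iic.2 (by omega)) (Set.mem_Iic.2 (by omega)) heq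
      omega
    · intro z hz hz'
      obtain ⟨i, hi, rfl⟩ := List.mem_map.1 hz'
      rw [List.mem_range] at hi
      exact hoff _ hz _ (by omega) rfl
  have := length_le_card_of_forall_mem hnodup (s := ndbW G (f (j + 1)) (f j)) fun z hz => by
    rw [ndbW, mem_filter_univ]
    rcases List.mem_append.1 hz with hz | hz
    · exact hcloser z hz
    · obtain ⟨i, hi, rfl⟩ := List.mem_map.1 hz
      rw [List.mem_range] at hi
      rw [dist_comm, hf _ _ (by omega) (by omega), dist_comm, hf _ _ (by omega) (by omega)]
      omega
  rw [(hndb _ _ (hf.adj hj)).2, List.length_append, List.length_map, List.length_range] at this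
  omega

theorem eq_of_closer (hf : IsGeodesic G d f) (hndb : IsNDB G (d + 1)) (hd : 1 ≤ d)
    (hu : G.dist u (f 1) < G.dist u (f 0)) (hv : G.dist v (f 1) < G.dist v (f 0))
    (hu' : ∀ m ≤ d, u ≠ f m) (hv' : ∀ m ≤ d, v ≠ f m) : u = v := by
  by_contra huv
  have := hf.length_le_of_closer hndb (j := 0) hd (l := [u, v]) (by simpa using huv)
    (by simpa using ⟨hu', hv'⟩) (by simpa using ⟨hu, hv⟩)
  simp at this

theorem eq_of_closer_last (hf : IsGeodesic G d f) (hndb : IsNDB G (d + 1)) (hd : 1 ≤ d)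
    (hu : G.dist u (f (d - 1)) < G.dist u (f d)) (hv : G.dist v (f (d - 1)) < G.dist v (f d))
    (hu' : ∀ m ≤ d, u ≠ f m) (hv' : ∀ m ≤ d, v ≠ f m) : u = v :=
  hf.reverse.eq_of_closer hndb hd hu hv (fun m _ => hu' _ (by omega)) (fun m _ => hv' _ (by omega))

end IsGeodesic

end Geodesic

namespace IsNDB

variable {V : Type*} [Fintype V] {G : SimpleGraph V} {γ : ℕ} {u v z : V} {l : List V}

theorem mem_of_dist_lt (hndb : IsNDB G γ) (huv : G.Adj u v) (hl : l.Nodup)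
    (hcloser : ∀ z ∈ l, G.dist z u < G.dist z v) (hγ : γ ≤ l.length)
    (hz : G.dist z u < G.dist z v) : z ∈ l := by
  refine mem_list_of_card_le_length (s := ndbW G u v) hl ?_ ((hndb u v huv).1.trans_le hγ) ?_
  · simpa [ndbW] using hcloser
  · simpa [ndbW] using hz

theorem exists_adj_not_adj (hndb : IsNDB G γ) (hγ : 2 ≤ γ) (hc : G.Connected) (huv : G.Adj u v) :
    ∃ s, G.Adj u s ∧ s ≠ v ∧ ¬ G.Adj v s := by
  obtain ⟨z, hz, hzu⟩ := exists_mem_notMem_of_length_lt_card (l := [u]) (s := ndbW G u v)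
    (by rw [(hndb u v huv).1]; exact hγ)
  rw [ndbW, mem_filter_univ, SimpleGraph.dist_comm, SimpleGraph.dist_comm (u := z)] at hz
  obtain ⟨s, hus, hs⟩ := exists_adj_dist_add_one_eq hc (u := u) (v := z) (by grind)
  refine ⟨s, hus, ?_, fun hvs => ?_⟩
  · rintro rfl
    omega
  · have := dist_le_dist_add_one hc hvs z
    omega

end IsNDB

/-- The graphs of the theorem: connected, `4`-regular, nicely distance-balanced with constant
`d + 1`, and of diameter at most `d`. -/
structure IsQuarticNDB {V : Type*} [Fintype V] (G : SimpleGraph V) [DecidableRel G.Adj] (d : ℕ) :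
    Prop where
  connected : G.Connected
  regular : G.IsRegularOfDegree 4
  isNDB : IsNDB G (d + 1)
  dist_le : ∀ u v, G.dist u v ≤ d

/-- `IsParallel G d f j w`: the vertex `w` is a neighbour of `f j` that is closer neither to `f 1`
than to `f 0`, nor to `f (d - 1)` than to `f d`. In particular `w` lies off the geodesic `f`. -/
structure IsParallel {V : Type*} (G : SimpleGraph V) (d : ℕ) (f : ℕ → V) (j : ℕ) (w : V) :
    Prop where
  adj : G.Adj (f j) w
  dist_first_le : G.dist w (f 0) ≤ G.dist w (f 1)
  dist_last_le : G.dist w (f d) ≤ G.dist w (f (d - 1))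

namespace IsParallel

section

variable {V : Type*} {G : SimpleGraph V} {d j : ℕ} {f : ℕ → V} {w : V}

theorem reverse (hw : IsParallel G d f j w) (hj : j ≤ d) :
    IsParallel G d (fun i => f (d - i)) (d - j) w where
  adj := by simpa [Nat.sub_sub_self hj] using hw.adj
  dist_first_le := by simpa using hw.dist_last_le
  dist_last_le := by
    rcases Nat.eq_zero_or_pos d with rfl | hd
    · simp
    · simpa [Nat.sub_sub_self hd] using hw.dist_first_le

theorem ne (hw : IsParallel G d f j w) (hf : IsGeodesic G d f) (hd : 2 ≤ d) :
    ∀ m ≤ d, w ≠ f m := by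
  rintro m hm rfl
  have h0 := hf 0 m (by omega) hm
  have hlast := hf m d hm le_rfl
  have := hw.dist_first_le
  have := hw.dist_last_le
  rcases Nat.eq_zero_or_pos m with rfl | hpos
  · have := hf 0 (d - 1) (by omega) (by omega)
    omega
  · have := hf 1 m hpos hm
    rw [dist_comm (v := f 0), dist_comm (v := f 1)] at *
    omega

theorem dist_eq (hw : IsParallel G d f j w) (hc : G.Connected) (hf : IsGeodesic G d f)
    (hj : 1 ≤ j) (hjd : j + 1 ≤ d) :
    G.dist w (f 0) = j ∧ G.dist w (f 1) = j ∧
      G.dist w (f d) = d - j ∧ G.dist w (f (d - 1)) = d - j := by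
  have hadj := dist_eq_one_iff_adj.2 hw.adj.symm
  have h1 := hf 1 j hj (by omega)
  have hpen := hf j (d - 1) (by omega) (by omega)
  have hends := hf 0 d (by omega) le_rfl
  have htri₁ : G.dist w (f 1) ≤ G.dist w (f j) + G.dist (f j) (f 1) := hc.dist_triangle
  have htri₂ : G.dist w (f (d - 1)) ≤ G.dist w (f j) + G.dist (f j) (f (d - 1)) := hc.dist_triangle
  have htri₃ : G.dist (f 0) (f d) ≤ G.dist (f 0) w + G.dist w (f d) := hc.dist_triangle
  rw [dist_comm (u := f j)] at htri₁
  rw [dist_comm (u := f 0) (v := w)] at htri₃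
  have := hw.dist_first_le
  have := hw.dist_last_le
  omega

end

variable {V : Type*} [Fintype V] {G : SimpleGraph V} [DecidableRel G.Adj] {d : ℕ}
  {f : ℕ → V} {u v w : V}

theorem not_adj_of_adj_last (hw : IsParallel G d f 2 w) (h : IsQuarticNDB G d)
    (hf : IsGeodesic G d f) (hd : 4 ≤ d) (hv : G.Adj v (f d)) (hwv : G.dist w v = d - 3) :
    ¬ G.Adj (f (d - 2)) v := by
  intro hadj
  obtain ⟨hw0, hw1, hwd, hwd'⟩ := hw.dist_eq h.connected hf (by omega) (by omega)
  obtain ⟨y, hwy, hy0⟩ := exists_adj_dist_add_one_eq h.connected (hw.ne hf (by omega) 0 (by omega))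
  have hg : IsGeodesic G d (Function.update f (d - 2 + 1) v) :=
    hf.update h.connected (by omega) hadj (by rwa [show d - 2 + 2 = d by omega])
  have hends := hf 0 d (by omega) le_rfl
  have hvd := dist_eq_one_iff_adj.2 hv
  have hwy1 := dist_eq_one_iff_adj.2 hwy
  rw [dist_comm] at hwy1
  have htri₁ : G.dist (f 0) (f d) ≤ G.dist (f 0) y + G.dist y (f d) := h.connected.dist_triangle
  have htri₂ : G.dist y v ≤ G.dist y w + G.dist w v := h.connected.dist_triangle
  rw [dist_comm (u := f 0) (v := y)] at htri₁
  have hpen : Function.update f (d - 2 + 1) v (d - 1) = v := by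
    rw [show d - 1 = d - 2 + 1 by omega, Function.update_self]
  have hlast : Function.update f (d - 2 + 1) v d = f d := Function.update_of_ne (by omega) _ _
  refine hwy.ne (hg.eq_of_closer_last h.isNDB (by omega) (u := w) (v := y) ?_ ?_
    (forall_ne_update ?_ (hw.ne hf (by omega)) _) (forall_ne_update ?_ ?_ _))
  · rw [hpen, hlast]
    omega
  · rw [hpen, hlast]
    omega
  · rintro rfl
    omega
  · rintro rfl
    omega
  · rintro m hm rfl
    have := hf 0 m (by omega) hm
    rw [dist_comm (u := f 0)] at this
    obtain rfl : m = 1 := by omega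
    rw [dist_comm] at hwy1
    omega

theorem dist_eq_sub_one_of_adj_last (hw : IsParallel G d f 2 w) (h : IsQuarticNDB G d)
    (hf : IsGeodesic G d f) (hd : 4 ≤ d) (hv : G.Adj v (f d)) (hwv : G.dist w v = d - 3) :
    G.dist v (f 1) = d - 1 := by
  obtain ⟨hw0, hw1, -, hwd'⟩ := hw.dist_eq h.connected hf (by omega) (by omega)
  have tri : ∀ x y z, G.dist x z ≤ G.dist x y + G.dist y z := fun _ _ _ => h.connected.dist_triangle
  have hfd := hf 0 d (by omega) le_rfl
  have hf1 := hf 1 d (by omega) le_rfl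
  have hv1 := dist_eq_one_iff_adj.2 hv
  have hvw := dist_comm (G := G) (u := w) (v := v)
  have htri₁ := tri v w (f 1)
  have htri₂ := tri v w (f 0)
  have htri₃ := tri (f 0) v (f d)
  have htri₄ := tri (f 1) v (f d)
  rw [dist_comm (u := f 0) (v := v)] at htri₃
  rw [dist_comm (u := f 1) (v := v)] at htri₄
  by_contra hne
  have hvf : ∀ m ≤ d, v ≠ f m := by
    rintro m hm rfl
    have := hf 0 m (by omega) hm
    rw [dist_comm] at this
    obtain rfl : m = d - 1 := by omega
    omega
  obtain ⟨s, hvs, hs⟩ := exists_adj_dist_add_one_eq h.connected (hvf 1 (by omega))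
  have hsv := dist_eq_one_iff_adj.2 hvs
  have htri₅ := tri v s (f 0)
  have hs0 := tri s (f 1) (f 0)
  have hf01 := dist_eq_one_iff_adj.2 (hf.adj (i := 0) (by omega)).symm
  rw [zero_add] at hf01
  by_cases hsf : ∃ m ≤ d, s = f m
  · obtain ⟨m, hm, rfl⟩ := hsf
    have := hf 0 m (by omega) hm
    rw [dist_comm] at this
    obtain rfl : m = d - 2 := by omega
    exact hw.not_adj_of_adj_last h hf hd hv hwv hvs.symm
  · push Not at hsf
    exact hvs.ne (hf.eq_of_closer h.isNDB (by omega) (by omega) (by omega) hvf hsf)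

theorem dist_eq_dist_add_two (hw : IsParallel G d f 2 w) (h : IsQuarticNDB G d)
    (hf : IsGeodesic G d f) (hd : 4 ≤ d) (hu : G.dist w u + G.dist u (f d) = d - 2)
    (hud : u ≠ f d) : G.dist u (f 1) = G.dist w u + 2 := by
  have tri : ∀ x y z, G.dist x z ≤ G.dist x y + G.dist y z := fun _ _ _ => h.connected.dist_triangle
  obtain ⟨-, hw1, hwd, hwd'⟩ := hw.dist_eq h.connected hf (by omega) (by omega)
  obtain ⟨v, hv, hvu⟩ := exists_adj_dist_add_one_eq h.connected hud.symm
  have hv1 := dist_eq_one_iff_adj.2 hv.symm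
  have hcomm := dist_comm (G := G) (u := u) (v := f d)
  have hcomm' := dist_comm (G := G) (u := u) (v := v)
  have htri₁ := tri w u v
  have htri₂ := tri w v (f d)
  have := hw.dist_eq_sub_one_of_adj_last h hf hd hv.symm (by omega)
  have htri₃ := tri v u (f 1)
  have htri₄ := tri u w (f 1)
  rw [dist_comm (u := u) (v := w)] at htri₄
  omega

end IsParallel

section Parallel

variable {V : Type*} [Fintype V] {G : SimpleGraph V} [DecidableRel G.Adj] {d : ℕ} {f : ℕ → V}
  {w : V}

/-- The first three vertices of a shortest path from `w` to `f d` would all be closer to `f 2`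
than to `f 1`. -/
theorem IsQuarticNDB.not_isParallel_two_of_five_le (h : IsQuarticNDB G d) (hf : IsGeodesic G d f)
    (hd : 5 ≤ d) : ¬ IsParallel G d f 2 w := by
  intro hw
  have tri : ∀ x y z, G.dist x z ≤ G.dist x y + G.dist y z := fun _ _ _ => h.connected.dist_triangle
  obtain ⟨-, -, hwd, -⟩ := hw.dist_eq h.connected hf (by omega) (by omega)
  obtain ⟨g, hg0, hgd, hg⟩ := exists_isGeodesic h.connected w (f d)
  rw [hwd] at hg hgd
  have hgw : ∀ i ≤ 2, G.dist w (g i) = i := fun i hi => by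
    simpa [hg0] using hg 0 i (by omega) (by omega)
  have hgf : ∀ i ≤ 2, G.dist (g i) (f d) = d - 2 - i := fun i hi => by
    simpa [hgd] using hg i (d - 2) (by omega) le_rfl
  have hgf1 : ∀ i ≤ 2, G.dist (g i) (f 1) = i + 2 := fun i hi => by
    have hwi := hgw i hi
    have hid := hgf i hi
    have := hw.dist_eq_dist_add_two h hf (by omega) (u := g i) (by omega) fun heq => by
      rw [heq, dist_self] at hid
      omega
    omega
  have hcloser : ∀ i ≤ 2, G.dist (g i) (f 2) < G.dist (g i) (f 1) := fun i hi => by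
    have := tri (g i) w (f 2)
    rw [dist_comm (u := g i) (v := w), hgw i hi, dist_eq_one_iff_adj.2 hw.adj.symm] at this
    have := hgf1 i hi
    omega
  have hoff : ∀ i ≤ 2, ∀ m ≤ d, g i ≠ f m := fun i hi =>
    hf.ne_of_lt_dist_add_dist (by rw [hgf i hi]; omega)
      (by rw [hgf i hi, hgf1 i hi]; omega)
  have hne : ∀ i ≤ 2, ∀ j ≤ 2, i ≠ j → g i ≠ g j := fun i hi j hj hij heq => by
    have := hgw i hi
    rw [heq, hgw j hj] at this
    exact hij this.symm
  have := hf.length_le_of_closer h.isNDB (j := 1) (l := [g 0, g 1, g 2]) (by omega)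
    (by simp [hne]) (by simpa using ⟨hoff 0 zero_le, hoff 1 one_le_two, hoff 2 le_rfl⟩)
    (by simp [hcloser])
  simp at this

end Parallel

/-- Two shortest paths `x₀ x₁ x₂ x₃ x₄` and `x₀ y₁ y₂ y₃ x₄` of length four joined by the rung
`x₂ y₂`, with `x₁, y₃` and `x₃, y₁` at distance three. -/
structure IsLadder {V : Type*} (G : SimpleGraph V) (x₀ x₁ x₂ x₃ x₄ y₁ y₂ y₃ : V) : Prop where
  dist_ends : G.dist x₀ x₄ = 4
  dist_x₁_y₃ : G.dist x₁ y₃ = 3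
  dist_x₃_y₁ : G.dist x₃ y₁ = 3
  adj_x₀_x₁ : G.Adj x₀ x₁
  adj_x₁_x₂ : G.Adj x₁ x₂
  adj_x₂_x₃ : G.Adj x₂ x₃
  adj_x₃_x₄ : G.Adj x₃ x₄
  adj_x₀_y₁ : G.Adj x₀ y₁
  adj_y₁_y₂ : G.Adj y₁ y₂
  adj_y₂_y₃ : G.Adj y₂ y₃
  adj_y₃_x₄ : G.Adj y₃ x₄
  adj_x₂_y₂ : G.Adj x₂ y₂

theorem exists_isLadder {V : Type*} [Fintype V] {G : SimpleGraph V} [DecidableRel G.Adj] {w : V}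
    {f : ℕ → V} (h : IsQuarticNDB G 4) (hf : IsGeodesic G 4 f) (hw : IsParallel G 4 f 2 w) :
    ∃ y₁ y₃, IsLadder G (f 0) (f 1) (f 2) (f 3) (f 4) y₁ w y₃ := by
  obtain ⟨hw0, -, hw4, -⟩ := hw.dist_eq h.connected hf (by decide) (by decide)
  obtain ⟨y₁, hwy₁, hy₁⟩ :=
    exists_adj_dist_add_one_eq h.connected (hw.ne hf (by decide) 0 (by decide))
  obtain ⟨y₃, hwy₃, hy₃⟩ :=
    exists_adj_dist_add_one_eq h.connected (hw.ne hf (by decide) 4 (by decide))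
  have hwy₁' := dist_eq_one_iff_adj.2 hwy₁
  have hwy₃' := dist_eq_one_iff_adj.2 hwy₃
  have hy₁0 : G.Adj y₁ (f 0) := dist_eq_one_iff_adj.1 (by omega)
  have hy₃4 : G.Adj y₃ (f 4) := dist_eq_one_iff_adj.1 (by omega)
  have h1 := hw.dist_eq_dist_add_two h hf le_rfl (u := y₃) (by omega) hy₃4.ne
  have h3 := (hw.reverse (by decide)).dist_eq_dist_add_two h hf.reverse le_rfl (u := y₁)
    (by simp only [Nat.sub_self]; omega) (by simpa using hy₁0.ne)
  simp only [Nat.reduceSub] at h3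
  rw [SimpleGraph.dist_comm] at h1 h3
  exact ⟨y₁, y₃, hf 0 4 (by decide) le_rfl, by omega, by omega, hf.adj (by decide),
    hf.adj (by decide), hf.adj (by decide), hf.adj (by decide), hy₁0.symm, hwy₁.symm, hwy₃, hy₃4,
    hw.adj⟩

namespace IsLadder

section

variable {V : Type*} {G : SimpleGraph V} {x₀ x₁ x₂ x₃ x₄ y₁ y₂ y₃ : V}

theorem swap (L : IsLadder G x₀ x₁ x₂ x₃ x₄ y₁ y₂ y₃) : IsLadder G x₀ y₁ y₂ y₃ x₄ x₁ x₂ x₃ where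
  dist_ends := L.dist_ends
  dist_x₁_y₃ := by rw [dist_comm, L.dist_x₃_y₁]
  dist_x₃_y₁ := by rw [dist_comm, L.dist_x₁_y₃]
  adj_x₀_x₁ := L.adj_x₀_y₁
  adj_x₁_x₂ := L.adj_y₁_y₂
  adj_x₂_x₃ := L.adj_y₂_y₃
  adj_x₃_x₄ := L.adj_y₃_x₄
  adj_x₀_y₁ := L.adj_x₀_x₁
  adj_y₁_y₂ := L.adj_x₁_x₂
  adj_y₂_y₃ := L.adj_x₂_x₃
  adj_y₃_x₄ := L.adj_x₃_x₄
  adj_x₂_y₂ := L.adj_x₂_y₂.symm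

theorem reverse (L : IsLadder G x₀ x₁ x₂ x₃ x₄ y₁ y₂ y₃) :
    IsLadder G x₄ x₃ x₂ x₁ x₀ y₃ y₂ y₁ where
  dist_ends := by rw [dist_comm, L.dist_ends]
  dist_x₁_y₃ := L.dist_x₃_y₁
  dist_x₃_y₁ := L.dist_x₁_y₃
  adj_x₀_x₁ := L.adj_x₃_x₄.symm
  adj_x₁_x₂ := L.adj_x₂_x₃.symm
  adj_x₂_x₃ := L.adj_x₁_x₂.symm
  adj_x₃_x₄ := L.adj_x₀_x₁.symm
  adj_x₀_y₁ := L.adj_y₃_x₄.symm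
  adj_y₁_y₂ := L.adj_y₂_y₃.symm
  adj_y₂_y₃ := L.adj_y₁_y₂.symm
  adj_y₃_x₄ := L.adj_x₀_y₁.symm
  adj_x₂_y₂ := L.adj_x₂_y₂

theorem dist_eq (L : IsLadder G x₀ x₁ x₂ x₃ x₄ y₁ y₂ y₃) (hc : G.Connected) :
    G.dist x₀ x₂ = 2 ∧ G.dist x₀ x₃ = 3 ∧ G.dist x₁ x₃ = 2 ∧ G.dist x₁ x₄ = 3 ∧
      G.dist x₂ x₄ = 2 ∧ G.dist x₁ y₂ = 2 ∧ G.dist x₂ y₃ = 2 := by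
  have hf := isGeodesic_of_path_four hc L.adj_x₀_x₁ L.adj_x₁_x₂ L.adj_x₂_x₃ L.adj_x₃_x₄ L.dist_ends
  refine ⟨hf 0 2 ?_ ?_, hf 0 3 ?_ ?_, hf 1 3 ?_ ?_, hf 1 4 ?_ ?_, hf 2 4 ?_ ?_, ?_, ?_⟩
  iterate 10 decide
  all_goals
    have hx₁y₃ := L.dist_x₁_y₃
    have h₁ := dist_le_dist_add_one hc L.adj_x₁_x₂ y₂
    have h₂ := dist_le_dist_add_one hc L.adj_x₁_x₂ y₃
    have h₃ := dist_le_dist_add_one hc L.adj_x₂_y₂ y₃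
    have h₄ := dist_le_dist_add_one hc L.adj_y₂_y₃.symm x₁
    have := dist_eq_one_iff_adj.2 L.adj_x₂_y₂
    have := dist_eq_one_iff_adj.2 L.adj_y₂_y₃
    rw [SimpleGraph.dist_comm, SimpleGraph.dist_comm (u := y₂)] at h₄
    omega

end

variable {V : Type*} [Fintype V] {G : SimpleGraph V} [DecidableRel G.Adj]
  {x₀ x₁ x₂ x₃ x₄ y₁ y₂ y₃ y₁' y₃' z v w w' p p' : V}

theorem mem_of_dist_x₂_lt_dist_x₁ (L : IsLadder G x₀ x₁ x₂ x₃ x₄ y₁ y₂ y₃) (h : IsQuarticNDB G 4)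
    (hz : G.dist z x₂ < G.dist z x₁) : z ∈ [x₂, x₃, x₄, y₂, y₃] := by
  have hx := L.dist_eq h.connected
  have hy := L.swap.dist_eq h.connected
  obtain ⟨h1, h2, -, h4, h5, h6, h7, h8, h9, h10, h11, h12⟩ := L
  simp only [← dist_eq_one_iff_adj] at h4 h5 h6 h7 h8 h9 h10 h11 h12
  refine h.isNDB.mem_of_dist_lt (dist_eq_one_iff_adj.1 h5).symm ?_ ?_ le_rfl hz
  · simp only [List.nodup_cons, List.mem_cons, not_or, List.not_mem_nil, not_false_eq_true,
      List.nodup_nil, and_true]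
    and_intros <;> grind [SimpleGraph.dist_comm]
  · grind [SimpleGraph.dist_comm]

theorem adj_fourth (L : IsLadder G x₀ x₁ x₂ x₃ x₄ y₁ y₂ y₃) (h : IsQuarticNDB G 4)
    (hx₂ : IsNbhd G x₂ [x₁, x₃, y₂, z]) : G.Adj z x₁ := by
  have hx := L.dist_eq h.connected
  have hzx₂ : G.dist z x₂ = 1 := dist_eq_one_iff_adj.2 (hx₂.adj_last).symm
  have hzx₁ : z ≠ x₁ := by grind [IsNbhd]
  have hz : ¬ G.dist z x₂ < G.dist z x₁ := fun hlt => by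
    have := L.mem_of_dist_x₂_lt_dist_x₁ h hlt
    grind [IsNbhd, SimpleGraph.dist_comm]
  have := h.connected.pos_dist_of_ne hzx₁
  exact dist_eq_one_iff_adj.1 (by omega)

theorem mem_of_dist_x₁_lt_dist_x₀ (L : IsLadder G x₀ x₁ x₂ x₃ x₄ y₁ y₂ y₃) (h : IsQuarticNDB G 4)
    (hx₂ : IsNbhd G x₂ [x₁, x₃, y₂, z]) (hw : G.dist w x₁ < G.dist w x₀) :
    w ∈ [x₁, x₂, x₃, x₄, z] := by
  have hx := L.dist_eq h.connected
  have hx' := L.reverse.dist_eq h.connected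
  have hzx₁ := dist_eq_one_iff_adj.2 (L.adj_fourth h hx₂)
  have hzx₂ : G.dist z x₂ = 1 := dist_eq_one_iff_adj.2 (hx₂.adj_last).symm
  have hzx₃ : G.dist z x₃ = 1 :=
    dist_eq_one_iff_adj.2 (L.reverse.adj_fourth h hx₂.swap_first)
  have hzx₀ := dist_le_dist_add_one h.connected L.adj_x₀_x₁ z
  have hzx₀' := dist_le_dist_add_one h.connected (dist_eq_one_iff_adj.1 hzx₃).symm x₀
  obtain ⟨h1, -, -, h4, h5, h6, h7, -, -, -, -, -⟩ := L
  simp only [← dist_eq_one_iff_adj] at h4 h5 h6 h7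
  refine h.isNDB.mem_of_dist_lt (dist_eq_one_iff_adj.1 h4).symm ?_ ?_ le_rfl hw
  · simp only [List.nodup_cons, List.mem_cons, not_or, List.not_mem_nil, not_false_eq_true,
      List.nodup_nil, and_true]
    and_intros <;> grind [SimpleGraph.dist_comm]
  · grind [SimpleGraph.dist_comm]

theorem fourth_ne_fourth (L : IsLadder G x₀ x₁ x₂ x₃ x₄ y₁ y₂ y₃) (h : IsQuarticNDB G 4)
    (hx₂ : IsNbhd G x₂ [x₁, x₃, y₂, z]) (hy₂ : IsNbhd G y₂ [y₁, y₃, x₂, w]) : z ≠ w := by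
  rintro rfl
  have hx := L.dist_eq h.connected
  have hy := L.swap.dist_eq h.connected
  have hnbrs : ∀ v ∈ [x₁, x₂, x₃, y₁, y₃], G.Adj z v := by
    have := L.adj_fourth h hx₂
    have := L.reverse.adj_fourth h hx₂.swap_first
    have := L.swap.adj_fourth h hy₂
    have := L.swap.reverse.adj_fourth h hy₂.swap_first
    grind [IsNbhd, SimpleGraph.adj_comm]
  have hnodup : [x₁, x₂, x₃, y₁, y₃].Nodup := by
    have := L.dist_x₁_y₃
    have := L.dist_x₃_y₁
    simp only [List.nodup_cons, List.mem_cons, not_or, List.not_mem_nil, not_false_eq_true,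
      List.nodup_nil, and_true]
    and_intros <;> grind [SimpleGraph.dist_comm]
  have := length_le_of_forall_adj h.regular hnodup hnbrs
  simp at this

theorem adj_x₀ (L : IsLadder G x₀ x₁ x₂ x₃ x₄ y₁ y₂ y₃) (h : IsQuarticNDB G 4)
    (hx₂ : IsNbhd G x₂ [x₁, x₃, y₂, z]) (hx₁ : IsNbhd G x₁ [x₀, x₂, z, p]) : G.Adj p x₀ := by
  have hx := L.dist_eq h.connected
  have hpx₁ : G.dist p x₁ = 1 := dist_eq_one_iff_adj.2 (hx₁.adj_last).symm
  have hp : ¬ G.dist p x₁ < G.dist p x₀ := fun hlt => by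
    have := L.mem_of_dist_x₁_lt_dist_x₀ h hx₂ hlt
    grind [IsNbhd, SimpleGraph.dist_comm]
  have := h.connected.pos_dist_of_ne (show p ≠ x₀ by grind [IsNbhd])
  exact dist_eq_one_iff_adj.1 (by omega)

/-- Otherwise every shortest path leaving `x₂` towards a vertex that is closer to `x₂` than to `z`
would have to stop at `y₂`. -/
theorem not_adj_fourth_fourth (L : IsLadder G x₀ x₁ x₂ x₃ x₄ y₁ y₂ y₃) (h : IsQuarticNDB G 4)
    (hx₂ : IsNbhd G x₂ [x₁, x₃, y₂, z]) (hy₂ : IsNbhd G y₂ [y₁, y₃, x₂, w]) : ¬ G.Adj w z := by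
  intro hwz
  have hzx₂ : G.Adj z x₂ := (hx₂.adj_last).symm
  have hzx₁ := L.adj_fourth h hx₂
  have hzx₃ := L.reverse.adj_fourth h hx₂.swap_first
  have hwy₁ := L.swap.adj_fourth h hy₂
  have hwy₃ := L.swap.reverse.adj_fourth h hy₂.swap_first
  have lip : ∀ {a b} c, G.Adj a b → G.dist a c ≤ G.dist b c + 1 :=
    fun c hab => dist_le_dist_add_one h.connected hab c
  obtain ⟨s, hs, hs'⟩ := exists_mem_notMem_of_length_lt_card (s := ndbW G x₂ z) (l := [x₂, y₂])
    (by rw [(h.isNDB x₂ z hzx₂.symm).1]; simp)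
  simp only [ndbW, mem_filter_univ, List.mem_cons, List.not_mem_nil, or_false, not_or] at hs hs'
  rw [SimpleGraph.dist_comm, SimpleGraph.dist_comm (v := z)] at hs
  obtain ⟨t, ht, hts⟩ := exists_adj_dist_add_one_eq h.connected (Ne.symm hs'.1)
  have : ¬ G.Adj z t := fun hzt => by grind
  obtain rfl : t = y₂ := by grind [IsNbhd]
  obtain ⟨r, hr, hrs⟩ := exists_adj_dist_add_one_eq h.connected (Ne.symm hs'.2)
  have : ∀ m, G.Adj z m → ¬ G.Adj m r := fun m hzm hmr => by grind
  have := (hy₂.2 r).1 hr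
  grind [SimpleGraph.adj_comm]

theorem dist_fourth_le (L : IsLadder G x₀ x₁ x₂ x₃ x₄ y₁ y₂ y₃) (h : IsQuarticNDB G 4)
    (hy₂ : IsNbhd G y₂ [y₁, y₃, x₂, w]) : G.dist w x₁ ≤ G.dist w x₂ := by
  have hy := L.swap.dist_eq h.connected
  have hwy₁ : G.dist w y₁ = 1 := dist_eq_one_iff_adj.2 (L.swap.adj_fourth h hy₂)
  have := L.dist_x₃_y₁
  have hne := hy₂.1
  by_contra! hlt
  have hmem := L.mem_of_dist_x₂_lt_dist_x₁ h hlt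
  simp only [List.mem_cons, List.not_mem_nil, or_false] at hmem
  rcases hmem with rfl | rfl | rfl | rfl | rfl
  · simp at hne
  · omega
  · rw [SimpleGraph.dist_comm] at hwy₁
    omega
  · exact (hy₂.adj_last).ne rfl
  · simp at hne

theorem adj_fourth_of_isNbhd (L : IsLadder G x₀ x₁ x₂ x₃ x₄ y₁ y₂ y₃) (h : IsQuarticNDB G 4)
    (hx₂ : IsNbhd G x₂ [x₁, x₃, y₂, z]) (hy₂ : IsNbhd G y₂ [y₁, y₃, x₂, w])
    (hx₁ : IsNbhd G x₁ [x₀, x₂, z, p]) : G.Adj w p := by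
  have hwy₃ : G.dist w y₃ = 1 :=
    dist_eq_one_iff_adj.2 (L.swap.reverse.adj_fourth h hy₂.swap_first)
  have hy₂w : G.Adj y₂ w := hy₂.adj_last
  have hwx₁ : ∀ {s}, G.Adj x₁ s → s ≠ w := by
    rintro s hs rfl
    have := dist_le_dist_add_one h.connected hs y₃
    have := L.dist_x₁_y₃
    omega
  have hw := L.dist_fourth_le h hy₂
  have hwx₂ := dist_le_dist_add_one h.connected hy₂w.symm x₂
  rw [dist_eq_one_iff_adj.2 L.adj_x₂_y₂.symm] at hwx₂
  obtain ⟨s, hs, hsw⟩ := exists_adj_dist_add_one_eq h.connected (u := x₁) (v := w) <| by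
    rintro rfl
    have := L.dist_x₁_y₃
    omega
  have hsw' : G.Adj s w := by
    have := h.connected.pos_dist_of_ne (hwx₁ hs)
    rw [SimpleGraph.dist_comm (u := x₁)] at hsw
    exact dist_eq_one_iff_adj.1 (by omega)
  have hmem := (hx₁.2 s).1 hs
  simp only [List.mem_cons, List.not_mem_nil, or_false] at hmem
  rcases hmem with rfl | rfl | rfl | rfl
  · have := dist_le_dist_add_one h.connected hsw' y₃
    have := L.swap.dist_eq h.connected
    omega
  · have := (hx₂.2 w).1 hsw'
    grind [SimpleGraph.dist_comm, L.dist_x₁_y₃, L.dist_x₃_y₁, L.fourth_ne_fourth h hx₂ hy₂]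
  · exact absurd hsw'.symm (L.not_adj_fourth_fourth h hx₂ hy₂)
  · exact hsw'.symm

theorem exists_isNbhd (L : IsLadder G x₀ x₁ x₂ x₃ x₄ y₁ y₂ y₃) (h : IsQuarticNDB G 4) :
    ∃ z, IsNbhd G x₂ [x₁, x₃, y₂, z] := by
  refine exists_isNbhd_of_three h.regular ?_
    (by simpa using ⟨L.adj_x₁_x₂.symm, L.adj_x₂_x₃, L.adj_x₂_y₂⟩)
  have hx := L.dist_eq h.connected
  have hy := L.swap.dist_eq h.connected
  grind [SimpleGraph.dist_comm]

/-- The fourth neighbour `z` of `x₂` is interchangeable with `x₂`. -/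
theorem exists_isLadder_fourth (L : IsLadder G x₀ x₁ x₂ x₃ x₄ y₁ y₂ y₃) (h : IsQuarticNDB G 4)
    (hx₂ : IsNbhd G x₂ [x₁, x₃, y₂, z]) :
    ∃ v y₁' y₃', IsNbhd G z [x₁, x₃, v, x₂] ∧ IsLadder G x₀ x₁ z x₃ x₄ y₁' v y₃' := by
  have hzx₁ := L.adj_fourth h hx₂
  have hzx₃ := L.reverse.adj_fourth h hx₂.swap_first
  have hzx₂ := hx₂.adj_last
  have hx := L.dist_eq h.connected
  obtain ⟨v, hz⟩ := exists_isNbhd_of_three h.regular (v := z) (a := x₁) (b := x₃) (c := x₂)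
    (by grind [IsNbhd, hx₂.1]) (by simpa using ⟨hzx₁, hzx₃, hzx₂.symm⟩)
  have hf := isGeodesic_of_path_four h.connected L.adj_x₀_x₁ hzx₁.symm hzx₃ L.adj_x₃_x₄ L.dist_ends
  have hzv : G.Adj z v := hz.adj_last
  have hne : v ∉ [x₁, x₂, x₃, z] := by grind [IsNbhd, hzv.ne]
  have hvx₀ : v ≠ x₀ := by
    rintro rfl
    have := dist_le_dist_add_one h.connected hzx₃.symm v
    have := dist_eq_one_iff_adj.2 hzv
    have := G.dist_comm (u := x₃) (v := v)
    omega
  have hvx₄ : v ≠ x₄ := by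
    rintro rfl
    have := dist_le_dist_add_one h.connected hzx₁.symm v
    have := dist_eq_one_iff_adj.2 hzv
    omega
  have hv₀ : G.dist v x₀ ≤ G.dist v x₁ := by
    by_contra! hlt
    have := L.mem_of_dist_x₁_lt_dist_x₀ h hx₂ hlt
    grind
  have hv₄ : G.dist v x₄ ≤ G.dist v x₃ := by
    by_contra! hlt
    have := L.reverse.mem_of_dist_x₁_lt_dist_x₀ h hx₂.swap_first hlt
    grind
  obtain ⟨y₁', y₃', L'⟩ := exists_isLadder h hf (w := v) ⟨hzv, hv₀, hv₄⟩
  exact ⟨v, y₁', y₃', hz.swap_last, L'⟩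

theorem exists_isNbhd_x₁ (L : IsLadder G x₀ x₁ x₂ x₃ x₄ y₁ y₂ y₃) (h : IsQuarticNDB G 4)
    (L' : IsLadder G x₀ x₁ z x₃ x₄ y₁' v y₃') (hx₂z : x₂ ≠ z) :
    ∃ p, IsNbhd G x₁ [x₀, x₂, z, p] := by
  refine exists_isNbhd_of_three h.regular ?_
    (by simpa using ⟨L.adj_x₀_x₁.symm, L.adj_x₁_x₂, L'.adj_x₁_x₂⟩)
  have hx := L.dist_eq h.connected
  have hx' := L'.dist_eq h.connected
  grind

theorem eq_or_eq_fourth (L : IsLadder G x₀ x₁ x₂ x₃ x₄ y₁ y₂ y₃) (h : IsQuarticNDB G 4)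
    (hx₂ : IsNbhd G x₂ [x₁, x₃, y₂, z]) (hy₂ : IsNbhd G y₂ [y₁, y₃, x₂, w])
    (hx₁ : IsNbhd G x₁ [x₀, x₂, z, p]) (hx₃ : IsNbhd G x₃ [x₄, x₂, z, p']) :
    p = y₁ ∨ p' = y₃ := by
  by_contra! hne
  have hnbrs : ∀ v ∈ [y₁, y₂, y₃, p, p'], G.Adj w v := by
    have := L.swap.adj_fourth h hy₂
    have := L.swap.reverse.adj_fourth h hy₂.swap_first
    have := L.adj_fourth_of_isNbhd h hx₂ hy₂ hx₁
    have := L.reverse.adj_fourth_of_isNbhd h hx₂.swap_first hy₂.swap_first hx₃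
    have := hy₂.adj_last
    grind [SimpleGraph.adj_comm]
  have hpx₀ := dist_eq_one_iff_adj.2 (L.adj_x₀ h hx₂ hx₁)
  have hpx₁ := dist_eq_one_iff_adj.2 (hx₁.adj_last)
  have hp'x₃ := dist_eq_one_iff_adj.2 (hx₃.adj_last)
  have hp'x₄ := L.reverse.adj_x₀ h hx₂.swap_first hx₃
  have hnodup : [y₁, y₂, y₃, p, p'].Nodup := by
    have hx := L.dist_eq h.connected
    have hy := L.swap.dist_eq h.connected
    have hends := L.dist_ends
    have hx₃y₁ := L.dist_x₃_y₁
    have hy₂' := hy₂.1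
    have := dist_le_dist_add_one h.connected hp'x₄.symm x₀
    simp only [List.nodup_cons, List.mem_cons, not_or, List.not_mem_nil, not_false_eq_true,
      List.nodup_nil, and_true] at hy₂' ⊢
    and_intros <;> grind [SimpleGraph.dist_comm]
  have := length_le_of_forall_adj h.regular hnodup hnbrs
  simp at this

theorem fourth_ne_of_ne (L : IsLadder G x₀ x₁ x₂ x₃ x₄ y₁ y₂ y₃) (h : IsQuarticNDB G 4)
    (hx₂ : IsNbhd G x₂ [x₁, x₃, y₂, z]) (hy₂ : IsNbhd G y₂ [y₁, y₃, x₂, w])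
    (hx₁ : IsNbhd G x₁ [x₀, x₂, z, p]) (L' : IsLadder G x₀ x₁ z x₃ x₄ y₁' v y₃')
    (hz : IsNbhd G z [x₁, x₃, v, x₂]) (hv : IsNbhd G v [y₁', y₃', z, w']) (hww' : w ≠ w') :
    p ≠ y₁ := by
  rintro rfl
  have hpx₀ := L.adj_x₀ h hx₂ hx₁
  have hpx₁ := hx₁.adj_last
  have hwp := L.adj_fourth_of_isNbhd h hx₂ hy₂ hx₁
  have hw'p := L'.adj_fourth_of_isNbhd h hz hv hx₁.swap_middle
  have hx := L.dist_eq h.connected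
  have hy := L.swap.dist_eq h.connected
  have hy' := L'.swap.dist_eq h.connected
  have hwz := L.not_adj_fourth_fourth h hx₂ hy₂
  have hy₂v : ¬ G.Adj y₂ v := fun hadj => by
    have := dist_eq_one_iff_adj.2 L.adj_x₀_y₁
    have := dist_eq_one_iff_adj.2 L.adj_y₃_x₄
    have := hz.adj_last
    grind [IsNbhd, SimpleGraph.adj_comm]
  have hy₂w' : y₂ ≠ w' := by
    rintro rfl
    exact hy₂v (hv.adj_last).symm
  have hnodup : [x₀, x₁, w, y₂, w'].Nodup := by
    have hwy₃ := dist_eq_one_iff_adj.2 (L.swap.reverse.adj_fourth h hy₂.swap_first)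
    have hw'y₃' :=
      dist_eq_one_iff_adj.2 (L'.swap.reverse.adj_fourth h hv.swap_first)
    have := L.dist_x₁_y₃
    have := L'.dist_x₁_y₃
    have := hy₂.adj_last.ne
    have := L.adj_x₀_x₁.ne
    simp only [List.nodup_cons, List.mem_cons, not_or, List.not_mem_nil, not_false_eq_true,
      List.nodup_nil, and_true]
    and_intros <;> grind [SimpleGraph.dist_comm]
  have := length_le_of_forall_adj h.regular (v := p) hnodup (by
    simpa using ⟨hpx₀, hpx₁.symm, hwp.symm, L.adj_y₁_y₂, hw'p.symm⟩)
  simp at this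

theorem rung_ne (L : IsLadder G x₀ x₁ x₂ x₃ x₄ y₁ y₂ y₃) (h : IsQuarticNDB G 4)
    (hx₂ : IsNbhd G x₂ [x₁, x₃, y₂, z]) (hy₂ : IsNbhd G y₂ [y₁, y₃, x₂, w])
    (L' : IsLadder G x₀ x₁ z x₃ x₄ y₁' v y₃') : y₂ ≠ v := by
  rintro rfl
  have hx₁z := dist_eq_one_iff_adj.2 L'.adj_x₁_x₂
  have hzx₃ := dist_eq_one_iff_adj.2 L'.adj_x₂_x₃.symm
  have hmem := (hy₂.2 z).1 L'.adj_x₂_y₂.symm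
  simp only [List.mem_cons, List.not_mem_nil, or_false] at hmem
  rcases hmem with rfl | rfl | rfl | rfl
  · have := L.dist_x₃_y₁
    omega
  · have := L.dist_x₁_y₃
    omega
  · exact hx₂.adj_last.ne rfl
  · exact L.fourth_ne_fourth h hx₂ hy₂ rfl

theorem isNbhd_fourth (L : IsLadder G x₀ x₁ x₂ x₃ x₄ y₁ y₂ y₃) (h : IsQuarticNDB G 4)
    (hx₂ : IsNbhd G x₂ [x₁, x₃, y₂, z]) (hy₂ : IsNbhd G y₂ [y₁, y₃, x₂, w])
    (hx₁ : IsNbhd G x₁ [x₀, x₂, z, p]) (hx₃ : IsNbhd G x₃ [x₄, x₂, z, p'])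
    (L' : IsLadder G x₀ x₁ z x₃ x₄ y₁' v y₃') (hvw : G.Adj v w) :
    IsNbhd G w [y₂, v, p, p'] := by
  have hwp := L.adj_fourth_of_isNbhd h hx₂ hy₂ hx₁
  have hwp' := L.reverse.adj_fourth_of_isNbhd h hx₂.swap_first hy₂.swap_first hx₃
  refine isNbhd_of_length_eq h.regular ?_
    (by simpa using ⟨hy₂.adj_last.symm, hvw.symm, hwp, hwp'⟩) rfl
  have hpx₀ := L.adj_x₀ h hx₂ hx₁
  have hp'x₄ := L.reverse.adj_x₀ h hx₂.swap_first hx₃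
  have := dist_eq_one_iff_adj.2 hpx₀
  have := dist_eq_one_iff_adj.2 hp'x₄
  have := dist_eq_one_iff_adj.2 hx₁.adj_last
  have := dist_eq_one_iff_adj.2 hx₃.adj_last
  have := dist_le_dist_add_one h.connected hpx₀.symm x₄
  have := L.dist_ends
  have := L.dist_eq h.connected
  have := L.swap.dist_eq h.connected
  have := L'.swap.dist_eq h.connected
  have := L.rung_ne h hx₂ hy₂ L'
  simp only [List.nodup_cons, List.mem_cons, not_or, List.not_mem_nil, not_false_eq_true,
    List.nodup_nil, and_true]
  and_intros <;> grind [SimpleGraph.dist_comm]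

theorem ne_of_fourth_eq (L : IsLadder G x₀ x₁ x₂ x₃ x₄ y₁ y₂ y₃) (h : IsQuarticNDB G 4)
    (hx₂ : IsNbhd G x₂ [x₁, x₃, y₂, z]) (hy₂ : IsNbhd G y₂ [y₁, y₃, x₂, w])
    (hx₁ : IsNbhd G x₁ [x₀, x₂, z, p]) (hx₃ : IsNbhd G x₃ [x₄, x₂, z, p'])
    (L' : IsLadder G x₀ x₁ z x₃ x₄ y₁' v y₃') : ¬ IsNbhd G v [y₁', y₃', z, w] := by
  intro hv
  have hw := L.isNbhd_fourth h hx₂ hy₂ hx₁ hx₃ L' hv.adj_last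
  have hpx₀ := L.adj_x₀ h hx₂ hx₁
  have hwp := L.adj_fourth_of_isNbhd h hx₂ hy₂ hx₁
  have hy := L.swap.dist_eq h.connected
  have hy' := L'.swap.dist_eq h.connected
  have hy₂v := L.rung_ne h hx₂ hy₂ L'
  have hp : y₁ = p ∧ y₁' = p := by
    have h₁ := (hw.2 y₁).1 (L.swap.adj_fourth h hy₂)
    have h₁' := (hw.2 y₁').1 (L'.swap.adj_fourth h hv)
    have := dist_eq_one_iff_adj.2 L.adj_x₀_y₁
    have := dist_eq_one_iff_adj.2 L'.adj_x₀_y₁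
    have := L.dist_x₃_y₁
    have := L'.dist_x₃_y₁
    have := dist_eq_one_iff_adj.2 hx₃.adj_last
    grind
  have hnodup : [x₀, x₁, w, y₂, v].Nodup := by
    have hwy₃ := dist_eq_one_iff_adj.2 (L.swap.reverse.adj_fourth h hy₂.swap_first)
    have := L.dist_x₁_y₃
    have := L.adj_x₀_x₁.ne
    have := L.dist_eq h.connected
    have := L'.dist_eq h.connected
    have := hy₂.adj_last.ne
    have := hv.adj_last.ne
    simp only [List.nodup_cons, List.mem_cons, not_or, List.not_mem_nil, not_false_eq_true,
      List.nodup_nil, and_true]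
    and_intros <;> grind [SimpleGraph.dist_comm]
  have := length_le_of_forall_adj h.regular (v := p) hnodup (by
    simpa using ⟨hpx₀, hx₁.adj_last.symm, hwp.symm, hp.1 ▸ L.adj_y₁_y₂, hp.2 ▸ L'.adj_y₁_y₂⟩)
  simp at this

end IsLadder

theorem not_isLadder {V : Type*} [Fintype V] {G : SimpleGraph V} [DecidableRel G.Adj]
    {x₀ x₁ x₂ x₃ x₄ y₁ y₂ y₃ : V} (h : IsQuarticNDB G 4) :
    ¬ IsLadder G x₀ x₁ x₂ x₃ x₄ y₁ y₂ y₃ := by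
  intro L
  obtain ⟨z, hx₂⟩ := L.exists_isNbhd h
  obtain ⟨w, hy₂⟩ := L.swap.exists_isNbhd h
  obtain ⟨v, y₁', y₃', hz, L'⟩ := L.exists_isLadder_fourth h hx₂
  obtain ⟨w', hv⟩ := L'.swap.exists_isNbhd h
  obtain ⟨p, hx₁⟩ := L.exists_isNbhd_x₁ h L' hx₂.adj_last.ne
  obtain ⟨p', hx₃⟩ := L.reverse.exists_isNbhd_x₁ h L'.reverse hx₂.adj_last.ne
  by_cases hww' : w = w'
  · subst hww'
    exact L.ne_of_fourth_eq h hx₂ hy₂ hx₁ hx₃ L' hv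
  rcases L.eq_or_eq_fourth h hx₂ hy₂ hx₁ hx₃ with hp | hp'
  · exact L.fourth_ne_of_ne h hx₂ hy₂ hx₁ L' hz hv hww' hp
  · exact L.reverse.fourth_ne_of_ne h hx₂.swap_first hy₂.swap_first hx₃ L'.reverse
      hz.swap_first hv.swap_first hww' hp'

/-- `IsSideVertex G d f a`: the vertex `a` lies off the geodesic `f`, is closer to `f 1` than to
`f 0`, but is not closer to `f (d - 1)` than to `f d`. -/
structure IsSideVertex {V : Type*} (G : SimpleGraph V) (d : ℕ) (f : ℕ → V) (a : V) : Prop where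
  ne : ∀ m ≤ d, a ≠ f m
  dist_first_lt : G.dist a (f 1) < G.dist a (f 0)
  dist_last_le : G.dist a (f d) ≤ G.dist a (f (d - 1))

theorem IsSideVertex.adj_last {V : Type*} {G : SimpleGraph V} {d : ℕ} {f : ℕ → V} {a : V}
    (ha : IsSideVertex G d f a) (hc : G.Connected) (had : G.Adj a (f (d - 1))) :
    G.Adj a (f d) := by
  have := ha.dist_last_le
  rw [dist_eq_one_iff_adj.2 had] at this
  have := hc.pos_dist_of_ne (ha.ne d le_rfl)
  exact dist_eq_one_iff_adj.1 (by omega)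

section SideVertex

variable {V : Type*} [Fintype V] {G : SimpleGraph V} [DecidableRel G.Adj] {d j : ℕ} {f : ℕ → V}
  {a w : V}

theorem IsQuarticNDB.not_isParallel_two (h : IsQuarticNDB G d) (hf : IsGeodesic G d f)
    (hd : 4 ≤ d) : ¬ IsParallel G d f 2 w := by
  rcases hd.eq_or_lt with rfl | hd
  · intro hw
    obtain ⟨y₁, y₃, L⟩ := exists_isLadder h hf hw
    exact not_isLadder h L
  · exact h.not_isParallel_two_of_five_le hf hd

theorem IsQuarticNDB.not_isParallel_sub_two (h : IsQuarticNDB G d) (hf : IsGeodesic G d f)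
    (hd : 4 ≤ d) : ¬ IsParallel G d f (d - 2) w := fun hw => by
  have := hw.reverse (by omega)
  rw [show d - (d - 2) = 2 by omega] at this
  exact h.not_isParallel_two hf.reverse hd this

theorem exists_isSideVertex (h : IsQuarticNDB G d) (hf : IsGeodesic G d f) (hj : 1 ≤ j)
    (hjd : j + 1 ≤ d) (hpar : ∀ w, ¬ IsParallel G d f j w) :
    ∃ a b, IsSideVertex G d f a ∧ IsSideVertex G d (fun i => f (d - i)) b ∧
      IsNbhd G (f j) [f (j - 1), f (j + 1), a, b] := by
  have hprev : G.Adj (f j) (f (j - 1)) := by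
    simpa [Nat.sub_add_cancel hj] using (hf.adj (i := j - 1) (by omega)).symm
  have hne : f (j - 1) ≠ f (j + 1) := fun heq => by
    have := hf.injOn (Set.mem_Iic.2 (by omega)) (Set.mem_Iic.2 hjd) heq
    omega
  obtain ⟨a, b, hN⟩ := exists_isNbhd_of_two h.regular hne hprev (hf.adj hjd)
  have hoff : ∀ w ∈ [a, b], ∀ m ≤ d, w ≠ f m := fun w hw =>
    hf.ne_of_adj (by omega) ((hN.2 w).2 (by grind)) (by grind [IsNbhd]) (by grind [IsNbhd])
  have hside : ∀ w ∈ [a, b],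
      G.dist w (f 1) < G.dist w (f 0) ∨ G.dist w (f (d - 1)) < G.dist w (f d) := fun w hw => by
    by_contra! hle
    exact hpar w ⟨(hN.2 w).2 (by grind), hle.1, hle.2⟩
  have hab : a ≠ b := by grind [IsNbhd]
  have hfirst : ¬ (G.dist a (f 1) < G.dist a (f 0) ∧ G.dist b (f 1) < G.dist b (f 0)) :=
    fun hcloser => hab (hf.eq_of_closer h.isNDB (by omega) hcloser.1 hcloser.2
      (hoff a (by simp)) (hoff b (by simp)))
  have hlast : ¬ (G.dist a (f (d - 1)) < G.dist a (f d) ∧ G.dist b (f (d - 1)) < G.dist b (f d)) :=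
    fun hcloser => hab (hf.eq_of_closer_last h.isNDB (by omega) hcloser.1 hcloser.2
      (hoff a (by simp)) (hoff b (by simp)))
  have hoffRev : ∀ w ∈ [a, b], ∀ m ≤ d, w ≠ f (d - m) := fun w hw m _ => hoff w hw _ (by omega)
  have hd1 : d - (d - 1) = 1 := by omega
  have ha := hside a (by simp)
  have hb := hside b (by simp)
  by_cases hafirst : G.dist a (f 1) < G.dist a (f 0)
  · exact ⟨a, b, ⟨hoff a (by simp), hafirst, by omega⟩,
      ⟨hoffRev b (by simp), by simpa using by omega, by simpa [hd1] using by omega⟩, hN⟩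
  · exact ⟨b, a, ⟨hoff b (by simp), by omega, by omega⟩,
      ⟨hoffRev a (by simp), by simpa using by omega, by simpa [hd1] using by omega⟩, hN.swap_last⟩

theorem IsSideVertex.dist_eq (ha : IsSideVertex G d f a) (h : IsQuarticNDB G d)
    (hf : IsGeodesic G d f) (hd : 4 ≤ d) (ha₂ : G.Adj (f 2) a) (ha₂' : G.Adj (f (d - 2)) a) :
    d = 4 ∧ G.dist a (f 0) = 3 := by
  have tri : ∀ x y z, G.dist x z ≤ G.dist x y + G.dist y z := fun _ _ _ => h.connected.dist_triangle
  have hfirst := ha.dist_first_lt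
  have hlast := ha.dist_last_le
  have hends := hf 0 d (by omega) le_rfl
  have hf12 := hf 1 2 (by omega) (by omega)
  have hpen := hf (d - 2) (d - 1) (by omega) (by omega)
  have htri₁ := tri a (f 2) (f 1)
  have htri₂ := tri a (f 1) (f 0)
  have htri₃ := tri a (f (d - 2)) (f (d - 1))
  have htri₄ := tri (f 0) a (f d)
  have hf01 := hf 0 1 (by omega) (by omega)
  rw [dist_eq_one_iff_adj.2 ha₂.symm, SimpleGraph.dist_comm (u := f 2)] at htri₁
  rw [SimpleGraph.dist_comm (u := f 1)] at htri₂
  rw [dist_eq_one_iff_adj.2 ha₂'.symm] at htri₃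
  rw [SimpleGraph.dist_comm (u := f 0) (v := a)] at htri₄
  by_contra hne
  have ha₀ : G.dist a (f 0) = d - 2 := by omega
  obtain ⟨t, hat, ht⟩ := exists_adj_dist_add_one_eq h.connected (ha.ne d le_rfl)
  have htri₅ := tri t a (f 1)
  have htri₆ := tri (f 0) t (f d)
  rw [dist_eq_one_iff_adj.2 hat.symm] at htri₅
  rw [SimpleGraph.dist_comm (u := f 0) (v := t)] at htri₆
  refine hat.ne (hf.eq_of_closer h.isNDB (by omega) hfirst (by omega) ha.ne ?_)
  rintro m hm rfl
  have := hf m d hm le_rfl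
  obtain rfl : m = d - 1 := by omega
  rw [dist_eq_one_iff_adj.2 hat] at hlast
  omega

theorem exists_isSideVertex_four (h : IsQuarticNDB G d) (hf : IsGeodesic G d f) (hd : 4 ≤ d) :
    d = 4 ∧ ∃ a b, IsSideVertex G d f a ∧ IsSideVertex G d (fun i => f (d - i)) b ∧
      IsNbhd G (f 2) [f 1, f 3, a, b] ∧ G.dist a (f 0) = 3 ∧ G.dist b (f 4) = 3 := by
  obtain ⟨a, b, ha, hb, hN⟩ := exists_isSideVertex h hf one_le_two (by omega) fun w =>
    h.not_isParallel_two hf hd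
  obtain ⟨a', b', ha', hb', hN'⟩ := exists_isSideVertex h hf (j := d - 2) (by omega) (by omega)
    fun w => h.not_isParallel_sub_two hf hd
  obtain rfl : a = a' := hf.eq_of_closer h.isNDB (by omega) ha.dist_first_lt ha'.dist_first_lt
    ha.ne ha'.ne
  obtain rfl : b = b' := hf.reverse.eq_of_closer h.isNDB (by omega) hb.dist_first_lt
    hb'.dist_first_lt hb.ne hb'.ne
  obtain ⟨rfl, ha₀⟩ := ha.dist_eq h hf hd hN.swap_last.adj_last hN'.swap_last.adj_last
  exact ⟨rfl, a, b, ha, hb, hN, ha₀,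
    (hb.dist_eq h hf.reverse hd hN'.adj_last hN.adj_last).2⟩

/-- A neighbour of `f 3` other than `a` and off the geodesic is parallel to `f`. -/
theorem exists_isSideVertex_forall_closer (h : IsQuarticNDB G 4) (hf : IsGeodesic G 4 f) :
    ∃ a, IsSideVertex G 4 f a ∧ G.Adj (f 2) a ∧ G.dist a (f 2) < G.dist a (f 1) ∧
      ∀ t, G.Adj (f 3) t → t ≠ f 2 → t ≠ f 4 → t ≠ a →
        (∀ m ≤ 4, t ≠ f m) ∧ G.dist t (f 2) < G.dist t (f 1) := by
  have tri : ∀ x y z, G.dist x z ≤ G.dist x y + G.dist y z := fun _ _ _ => h.connected.dist_triangle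
  obtain ⟨-, a, b, ha, hb, hN, ha₀, hb₄⟩ := exists_isSideVertex_four h hf le_rfl
  have ha₂ := hN.swap_last.adj_last
  refine ⟨a, ha, ha₂, ?_, fun t ht ht₂ ht₄ hta => ?_⟩
  · have := tri a (f 1) (f 0)
    have := hf 0 1 (by omega) (by omega)
    rw [dist_eq_one_iff_adj.2 ha₂.symm]
    rw [SimpleGraph.dist_comm] at this
    omega
  have hoff := hf.ne_of_adj (by omega) ht ht₂ ht₄
  have ht₃ := dist_eq_one_iff_adj.2 ht.symm
  have htb : t ≠ b := by
    rintro rfl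
    have := hf 3 4 (by omega) le_rfl
    have := tri t (f 3) (f 4)
    omega
  have hpar : IsParallel G 4 f 3 t := by
    refine ⟨ht, not_lt.1 fun hlt => hta ?_, not_lt.1 fun hlt => htb ?_⟩
    · exact hf.eq_of_closer h.isNDB (by omega) hlt ha.dist_first_lt hoff ha.ne
    · exact hf.reverse.eq_of_closer h.isNDB (by omega) hlt hb.dist_first_lt
        (fun m _ => hoff _ (by omega)) hb.ne
  have := (hpar.dist_eq h.connected hf (by omega) le_rfl).2.1
  have := tri t (f 3) (f 2)
  have := hf 2 3 (by omega) (by omega)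
  rw [SimpleGraph.dist_comm] at this
  exact ⟨hoff, by omega⟩

theorem exists_isNbhd_three (h : IsQuarticNDB G 4) (hf : IsGeodesic G 4 f) :
    ∃ a t, IsSideVertex G 4 f a ∧ G.Adj (f 2) a ∧ G.dist a (f 2) < G.dist a (f 1) ∧
      IsNbhd G (f 3) [f 2, f 4, a, t] ∧
      (∀ m ≤ 4, t ≠ f m) ∧ G.dist t (f 2) < G.dist t (f 1) := by
  obtain ⟨a, ha, ha₂, hacloser, hother⟩ := exists_isSideVertex_forall_closer h hf
  have hf24 : f 2 ≠ f 4 := fun heq => by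
    simpa using hf.injOn (Set.mem_Iic.2 (by omega)) (Set.mem_Iic.2 (by omega)) heq
  obtain ⟨c, e, hN₃⟩ := exists_isNbhd_of_two h.regular hf24 (hf.adj (i := 2) (by omega)).symm
    (hf.adj le_rfl)
  have hc := hother c ((hN₃.2 c).2 (by simp))
  have he := hother e ((hN₃.2 e).2 (by simp))
  have hdistinct := hN₃.1
  by_cases hca : c = a
  · exact ⟨a, e, ha, ha₂, hacloser, hca ▸ hN₃, he (by grind) (by grind) (by grind)⟩
  by_cases hea : e = a
  · exact ⟨a, c, ha, ha₂, hacloser, hea ▸ hN₃.swap_last, hc (by grind) (by grind) (by grind)⟩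
  have hc := hc (by grind) (by grind) hca
  have he := he (by grind) (by grind) hea
  have := hf.length_le_of_closer h.isNDB (j := 1) (by omega) (l := [a, c, e]) (by grind)
    (by simpa using ⟨ha.ne, hc.1, he.1⟩) (by simpa using ⟨hacloser, hc.2, he.2⟩)
  simp at this

/-- The vertices `f 3` and `a` would be adjacent twins. -/
theorem IsQuarticNDB.not_isGeodesic_four (h : IsQuarticNDB G 4) : ¬ IsGeodesic G 4 f := by
  intro hf
  obtain ⟨a, t, ha, ha₂, hacloser, hN₃, ht, htcloser⟩ := exists_isNbhd_three h hf
  have ha₃ : G.Adj a (f 3) := ((hN₃.2 a).2 (by simp)).symm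
  have ha₄ : G.Adj a (f 4) := ha.adj_last h.connected ha₃
  let g := Function.update f 3 a
  have hg : IsGeodesic G 4 g := hf.update h.connected (j := 2) le_rfl ha₂ ha₄
  obtain ⟨a', t', ha', -, -, hNa, ht', htcloser'⟩ := exists_isNbhd_three h hg
  have hg₃ : g 3 = a := Function.update_self ..
  have hgf : ∀ m, m ≠ 3 → g m = f m := fun m hm => Function.update_of_ne hm ..
  rw [hgf 2 (by omega), hg₃, hgf 4 (by omega)] at hNa
  rw [hgf 1 (by omega), hgf 2 (by omega)] at htcloser'
  have hinj : ∀ m ≤ 4, f 3 = f m → 3 = m := fun m hm =>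
    hf.injOn (Set.mem_Iic.2 (by omega)) (Set.mem_Iic.2 hm)
  have hf₃ : ∀ m ≤ 4, f 3 ≠ g m := fun m hm => by
    rcases eq_or_ne m 3 with rfl | hm₃
    · exact hg₃ ▸ ha₃.ne.symm
    · exact hgf m hm₃ ▸ fun heq => hm₃ (hinj m hm heq).symm
  obtain rfl : a' = f 3 := by
    refine hg.eq_of_closer h.isNDB (by omega) ha'.dist_first_lt ?_ ha'.ne hf₃
    have := hf 0 3 (by omega) (by omega)
    have := hf 1 3 (by omega) (by omega)
    rw [hgf 1 (by omega), hgf 0 (by omega), SimpleGraph.dist_comm,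
      SimpleGraph.dist_comm (u := f 3)]
    omega
  obtain rfl : t = t' := by
    by_contra htt
    have ht'off : ∀ m ≤ 4, t' ≠ f m := fun m hm => by
      rcases eq_or_ne m 3 with rfl | hm₃
      · grind [IsNbhd]
      · exact hgf m hm₃ ▸ ht' m hm
    have := hf.length_le_of_closer h.isNDB (j := 1) (by omega) (l := [a, t, t'])
      (by grind [IsNbhd]) (by simpa using ⟨ha.ne, ht, ht'off⟩)
      (by simpa using ⟨hacloser, htcloser, htcloser'⟩)
    simp at this
  obtain ⟨s, hs, hsa, hns⟩ := h.isNDB.exists_adj_not_adj (by omega) h.connected ha₃.symm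
  rw [hN₃.2] at hs
  rw [hNa.2] at hns
  grind

theorem IsQuarticNDB.diam_le_three (h : IsQuarticNDB G d) (hf : IsGeodesic G d f) : d ≤ 3 := by
  by_contra! hd
  obtain ⟨rfl, -⟩ := exists_isSideVertex_four h hf hd
  exact h.not_isGeodesic_four hf

end SideVertex

section DistanceTwo

variable {V : Type*} {G : SimpleGraph V} {c u v w x z : V}

theorem exists_adj_adj_of_dist_eq_two (hc : G.Connected) (hxz : G.dist x z = 2) :
    ∃ c, G.Adj x c ∧ G.Adj c z := by
  have hne : x ≠ z := by
    rintro rfl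
    simp at hxz
  obtain ⟨c, hxc, hcz⟩ := exists_adj_dist_add_one_eq hc hne
  exact ⟨c, hxc, dist_eq_one_iff_adj.1 (by omega)⟩

theorem dist_le_two (hc : G.Connected) (hxc : G.Adj x c) (hcz : G.Adj c z) : G.dist x z ≤ 2 := by
  have : G.dist x z ≤ G.dist x c + G.dist c z := hc.dist_triangle
  rwa [dist_eq_one_iff_adj.2 hxc, dist_eq_one_iff_adj.2 hcz] at this

theorem dist_eq_two_of_dist_eq_three (hc : G.Connected) (hz : G.dist z u = 3) (huv : G.Adj u v)
    (hvw : G.Adj v w) (hwz : G.Adj w z) : G.dist z v = 2 := by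
  have := dist_le_two hc hwz.symm hvw.symm
  have : G.dist z u ≤ G.dist z v + G.dist v u := hc.dist_triangle
  rw [dist_eq_one_iff_adj.2 huv.symm] at this
  omega

end DistanceTwo

section DiameterThree

variable {V : Type*} [Fintype V] {G : SimpleGraph V} [DecidableRel G.Adj] {u v w z : V}
  {l l' : List V}

namespace IsQuarticNDB

/-- Both sides complete the `4 - 1` neighbours of `v` other than `u`, respectively the `4` vertices
of `W v u`, from the vertex `v` and the neighbours of `v` at distance two from `u`. -/
theorem card_ndbD_three_two (h : IsQuarticNDB G 3) (huv : G.Adj u v) :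
    (ndbD G u v 3 2).card = (ndbD G u v 1 1).card := by
  classical
  have hdist : ∀ z, G.dist z u ≤ G.dist z v + 1 ∧ G.dist z v ≤ G.dist z u + 1 ∧
      1 ≤ G.dist z u + G.dist z v ∧ G.dist z u ≤ 3 := fun z => by
    have hu : G.dist z u ≤ G.dist z v + G.dist v u := h.connected.dist_triangle
    have hv : G.dist z v ≤ G.dist z u + G.dist u v := h.connected.dist_triangle
    have huv' : G.dist u v ≤ G.dist u z + G.dist z v := h.connected.dist_triangle
    rw [SimpleGraph.dist_comm (u := u) (v := z)] at huv'
    have := h.dist_le z u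
    have := dist_eq_one_iff_adj.2 huv
    have := dist_eq_one_iff_adj.2 huv.symm
    omega
  have hW : ndbW G v u = insert v (ndbD G u v 2 1 ∪ ndbD G u v 3 2) := by
    ext z
    have := hdist z
    simp only [ndbW, ndbD, mem_filter_univ, mem_insert, mem_union,
      ← h.connected.dist_eq_zero_iff (u := z)]
    omega
  have hN : G.neighborFinset v = insert u (ndbD G u v 1 1 ∪ ndbD G u v 2 1) := by
    ext z
    simp only [ndbD, mem_filter_univ, mem_insert, mem_union, mem_neighborFinset,
      ← h.connected.dist_eq_zero_iff (u := z), ← dist_eq_one_iff_adj,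
      SimpleGraph.dist_comm (u := v)]
    have := hdist z
    omega
  have hWcard := (h.isNDB u v huv).2
  have hNcard := h.regular v
  have hdisj : ∀ {i j} k m, i ≠ j → Disjoint (ndbD G u v i k) (ndbD G u v j m) :=
    fun k m hij => disjoint_filter.2 (by omega)
  rw [← card_neighborFinset_eq_degree, hN, card_insert_of_notMem (by simp [ndbD]),
    card_union_of_disjoint (hdisj _ _ (by simp))] at hNcard
  rw [hW, card_insert_of_notMem (by simp [ndbD]),
    card_union_of_disjoint (hdisj _ _ (by simp))] at hWcard
  omega

theorem exists_common_adj (h : IsQuarticNDB G 3) (huv : G.Adj u v) (hl : l.Nodup)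
    (hfar : ∀ z ∈ l, G.dist z u = 3 ∧ G.dist z v = 2) (hlen : l'.length < l.length) :
    ∃ c, G.Adj u c ∧ G.Adj v c ∧ c ∉ l' := by
  have := length_le_card_of_forall_mem hl (s := ndbD G u v 3 2) (by simpa [ndbD] using hfar)
  rw [h.card_ndbD_three_two huv] at this
  obtain ⟨c, hc, hcl⟩ := exists_mem_notMem_of_length_lt_card (hlen.trans_le this)
  rw [ndbD, mem_filter_univ, dist_eq_one_iff_adj, dist_eq_one_iff_adj] at hc
  exact ⟨c, hc.1.symm, hc.2.symm, hcl⟩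

theorem exists_dist_eq_three (h : IsQuarticNDB G 3) (huv : G.Adj u v) (hl : l.Nodup)
    (hcommon : ∀ c ∈ l, G.Adj u c ∧ G.Adj v c) (hlen : l'.length < l.length) :
    ∃ z, G.dist z u = 3 ∧ G.dist z v = 2 ∧ z ∉ l' := by
  have := length_le_card_of_forall_mem hl (s := ndbD G u v 1 1)
    (by simpa [ndbD, G.adj_comm] using hcommon)
  rw [← h.card_ndbD_three_two huv] at this
  obtain ⟨z, hz, hzl⟩ := exists_mem_notMem_of_length_lt_card (hlen.trans_le this)
  rw [ndbD, mem_filter_univ] at hz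
  exact ⟨z, hz.1, hz.2, hzl⟩

theorem eq_or_adj_or_exists_of_dist_ne_three (h : IsQuarticNDB G 3) (huz : G.dist z u ≠ 3) :
    u = z ∨ G.Adj u z ∨ ∃ s, G.Adj u s ∧ G.Adj s z := by
  by_cases hne : u = z
  · exact .inl hne
  by_cases hadj : G.Adj u z
  · exact .inr (.inl hadj)
  rw [SimpleGraph.dist_comm] at huz
  have := h.dist_le u z
  have := h.connected.one_lt_dist_of_ne_of_not_adj hne hadj
  exact .inr (.inr (exists_adj_adj_of_dist_eq_two h.connected (by omega)))

theorem exists_adj_dist_eq_three (h : IsQuarticNDB G 3) {p q : V} (hN : IsNbhd G v [u, p, q, w])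
    (hup : G.Adj u p) (huq : G.Adj u q) (a : V) : ∃ z, G.Adj w z ∧ G.dist z u = 3 ∧ z ≠ a := by
  have huv : G.Adj u v := ((hN.2 u).2 (by simp)).symm
  obtain ⟨z, hzu, hzv, hza⟩ := h.exists_dist_eq_three huv (l := [p, q]) (l' := [a])
    (by grind [IsNbhd]) (by grind [IsNbhd]) (by simp)
  obtain ⟨s, hzs, hsv⟩ := exists_adj_adj_of_dist_eq_two h.connected hzv
  have hsu : ¬ G.Adj s u := fun hsu => by
    have := dist_le_two h.connected hzs hsu
    omega
  have hsu' : s ≠ u := fun hsu' => by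
    rw [← hsu', dist_eq_one_iff_adj.2 hzs] at hzu
    omega
  obtain rfl : s = w := by grind [IsNbhd, SimpleGraph.adj_comm]
  exact ⟨z, hzs.symm, hzu, by simpa using hza⟩

end IsQuarticNDB

end DiameterThree

section Clique

variable {V : Type*} [Fintype V] {G : SimpleGraph V} [DecidableRel G.Adj] {p q u v w : V}

namespace IsQuarticNDB

theorem not_adj_of_adj_adj (h : IsQuarticNDB G 3) (hN : IsNbhd G v [u, p, q, w])
    (hup : G.Adj u p) (huq : G.Adj u q) : ¬ G.Adj u w := by
  obtain ⟨s, hvs, hsu, hns⟩ := h.isNDB.exists_adj_not_adj (by simp) h.connected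
    ((hN.2 u).2 (by simp))
  grind [IsNbhd]

theorem exists_adj_mem_of_far (h : IsQuarticNDB G 3) {a b z : V} {l l' : List V}
    (hN : IsNbhd G w [v, z, a, b]) (hl : l.Nodup) (hadj : ∀ y ∈ l, G.Adj v y)
    (hfar : ∀ y ∈ l, G.dist y z = 3) (hlen : l'.length < l.length) :
    ∃ c ∈ [a, b], G.Adj z c ∧ c ∉ l' := by
  have hwz : G.Adj w z := (hN.2 z).2 (by simp)
  have hwv : G.Adj w v := (hN.2 v).2 (by simp)
  obtain ⟨c, hzc, hwc, hcl⟩ := h.exists_common_adj hwz.symm hl (fun y hy =>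
    ⟨hfar y hy, dist_eq_two_of_dist_eq_three h.connected (hfar y hy) hwz.symm hwv (hadj y hy)⟩) hlen
  refine ⟨c, ?_, hzc, hcl⟩
  obtain ⟨y, hy⟩ := List.exists_mem_of_length_pos (hlen.pos)
  have hcv : c ≠ v := by
    rintro rfl
    have := dist_le_two h.connected (hadj y hy).symm hzc.symm
    have := hfar y hy
    omega
  have := hzc.ne
  grind [IsNbhd]

theorem dist_eq_three_of_two_common_adj (h : IsQuarticNDB G 3) {a b c : V}
    (hv : IsNbhd G v [u, p, q, w]) (hw : IsNbhd G w [v, a, b, c]) (hup : G.Adj u p)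
    (huq : G.Adj u q) (ha : G.dist a u ≠ 3) : G.dist b u = 3 ∧ G.dist c u = 3 := by
  have huv : G.Adj u v := ((hv.2 u).2 (by simp)).symm
  obtain ⟨y, hwy, hyu, -⟩ := h.exists_adj_dist_eq_three hv hup huq v
  obtain ⟨z, hwz, hzu, hzy⟩ := h.exists_adj_dist_eq_three hv hup huq y
  have := dist_eq_one_iff_adj.2 huv.symm
  grind [IsNbhd]

theorem exists_dist_ne_three_of_two_common_adj (h : IsQuarticNDB G 3) {a b c : V}
    (hv : IsNbhd G v [u, p, q, w]) (hw : IsNbhd G w [v, a, b, c]) (hup : G.Adj u p)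
    (huq : G.Adj u q) : ∃ z ∈ [a, b, c], G.dist z u ≠ 3 := by
  by_contra! hfar
  have huv : G.Adj u v := ((hv.2 u).2 (by simp)).symm
  obtain ⟨s, hus, hvs, hs⟩ := h.exists_common_adj huv (l := [a, b, c]) (l' := [p, q])
    (by grind [IsNbhd]) (fun z hz => ⟨hfar z hz, dist_eq_two_of_dist_eq_three h.connected
      (hfar z hz) huv hv.adj_last ((hw.2 z).2 (List.mem_cons_of_mem _ hz))⟩) (by simp)
  have := h.not_adj_of_adj_adj hv hup huq
  have := hus.ne
  grind [IsNbhd]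

theorem adj_of_dist_eq_three_of_dist_eq_three (h : IsQuarticNDB G 3) {a b z y y' : V}
    (hw : IsNbhd G w [v, z, a, b]) (hvy : G.Adj v y) (hvy' : G.Adj v y') (hne : y ≠ y')
    (hzy : G.dist z y = 3) (hzy' : G.dist z y' = 3) : G.Adj z a ∧ G.Adj z b := by
  have hcommon := fun l' hlen => h.exists_adj_mem_of_far (l := [y, y']) (l' := l') hw
    (by simpa using hne) (by simp [hvy, hvy'])
    (by simp [SimpleGraph.dist_comm, hzy, hzy']) hlen
  have := hcommon [a] (by simp)
  have := hcommon [b] (by simp)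
  grind

theorem exists_isNbhd_of_clique (h : IsQuarticNDB G 3) (hv : IsNbhd G v [u, p, q, w])
    (hup : G.Adj u p) (huq : G.Adj u q) (hpq : G.Adj p q) :
    ∃ a b c, IsNbhd G w [v, a, b, c] ∧ G.dist a p = 3 ∧ G.dist a q = 3 ∧ G.dist b u = 3 ∧
      G.dist c u = 3 ∧ G.Adj a b ∧ G.Adj a c ∧ G.Adj b c := by
  have hvl : ∀ y ∈ [u, p, q], G.Adj v y := by grind [IsNbhd]
  obtain ⟨b, hwb, hbu, -⟩ := h.exists_adj_dist_eq_three hv hup huq v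
  obtain ⟨c, hwc, hcu, hcb⟩ := h.exists_adj_dist_eq_three hv hup huq b
  have hvu := dist_eq_one_iff_adj.2 (hvl u (by simp))
  obtain ⟨a, hw⟩ := exists_isNbhd_of_three h.regular (v := w) (a := v) (b := b) (c := c)
    (by grind) (by grind [hv.adj_last.symm])
  replace hw : IsNbhd G w [v, a, b, c] := hw.swap_last.swap_middle
  have hp := hv.swap_first
  have hq := hv.swap_middle.swap_first
  have hnear : ∀ {z a b}, IsNbhd G w [v, z, a, b] →
      ¬ (G.dist z u = 3 ∧ G.dist z p = 3 ∧ G.dist z q = 3) := by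
    intro z a b hw hz
    have := h.exists_adj_mem_of_far (l := [u, p, q]) (l' := [a, b]) hw (by grind [IsNbhd]) hvl
      (by simpa [SimpleGraph.dist_comm] using hz) (by simp)
    grind
  have hb := hnear hw.swap_middle
  have hc := hnear hw.swap_last.swap_middle
  have hpb := h.dist_eq_three_of_two_common_adj hp hw.swap_middle hup.symm hpq
  have hpc := h.dist_eq_three_of_two_common_adj hp hw.swap_last.swap_middle hup.symm hpq
  have hqb := h.dist_eq_three_of_two_common_adj hq hw.swap_middle huq.symm hpq.symm
  have hqc := h.dist_eq_three_of_two_common_adj hq hw.swap_last.swap_middle huq.symm hpq.symm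
  have hshared := fun {z a b y y'} hw hy hy' =>
    h.adj_of_dist_eq_three_of_dist_eq_three (v := v) (w := w) (z := z) (a := a) (b := b)
      (y := y) (y' := y') hw (hvl y hy) (hvl y' hy')
  have := hshared (y := p) (y' := q) hw (by simp) (by simp) (by grind [IsNbhd])
  have := hshared (y := u) (y' := p) hw.swap_middle (by simp) (by simp) (by grind [IsNbhd])
  have := hshared (y := u) (y' := q) hw.swap_middle (by simp) (by simp) (by grind [IsNbhd])
  exact ⟨a, b, c, hw, by grind⟩

theorem eq_or_adj_of_dist_ne_three (h : IsQuarticNDB G 3) {a t : V}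
    (hu : IsNbhd G u [v, p, q, t]) (hne : u ≠ a) (hva : v ≠ a) (hnadj : ¬ G.Adj v a)
    (hau : G.dist a u ≠ 3) (hap : G.dist a p = 3) (haq : G.dist a q = 3) :
    t = a ∨ G.Adj t a := by
  have hadj : ∀ y, G.Adj y a → G.dist a y = 1 := fun y hy => dist_eq_one_iff_adj.2 hy.symm
  obtain hua | hua | ⟨s, hus, hsa⟩ := h.eq_or_adj_or_exists_of_dist_ne_three hau
  · exact absurd hua hne
  · have : a ∈ [v, p, q, t] := (hu.2 a).1 hua
    grind
  · have : s ∈ [v, p, q, t] := (hu.2 s).1 hus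
    grind

theorem not_adj_of_clique (h : IsQuarticNDB G 3) (hvu : G.Adj v u) (hvp : G.Adj v p)
    (hvq : G.Adj v q) (hup : G.Adj u p) (huq : G.Adj u q) : ¬ G.Adj p q := by
  intro hpq
  obtain ⟨w, hv⟩ := exists_isNbhd_of_three h.regular (v := v) (a := u) (b := p) (c := q)
    (by grind [SimpleGraph.irrefl]) (by grind)
  obtain ⟨t, hu⟩ := exists_isNbhd_of_three h.regular (v := u) (a := v) (b := p) (c := q)
    (by grind [SimpleGraph.irrefl]) (by grind [SimpleGraph.adj_comm])
  obtain ⟨a, b, c, hw, hap, haq, hbu, hcu, hab, hac, -⟩ :=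
    h.exists_isNbhd_of_clique hv hup huq hpq
  obtain ⟨a', b', c', ht, hap', -, hbv, hcv, hab', -⟩ :=
    h.exists_isNbhd_of_clique hu hvp hvq hpq
  have hc := h.connected
  have hau : G.dist a u ≠ 3 := by
    have := h.exists_dist_ne_three_of_two_common_adj hv hw hup huq
    grind
  have hwv : G.dist w v = 1 := dist_eq_one_iff_adj.2 hv.adj_last.symm
  have hne : u ≠ a := by grind [dist_eq_one_iff_adj.2 hup]
  have hta : t ≠ a := by
    rintro rfl
    have : w ∈ [u, a', b', c'] := (ht.2 w).1 ((hw.2 t).2 (by simp)).symm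
    have : G.dist w p ≤ 2 := dist_le_two hc hv.adj_last.symm hvp
    grind [IsNbhd]
  replace hta : G.Adj t a := (h.eq_or_adj_of_dist_ne_three hu hne (by grind [IsNbhd])
    (by grind [IsNbhd, hw.self_notMem]) hau hap haq).resolve_left hta
  have hav : G.dist a v ≤ 2 :=
    dist_le_two hc ((hw.2 a).2 (by simp)).symm hv.adj_last.symm
  have hb'u : G.dist b' u ≤ 2 :=
    dist_le_two hc ((ht.2 b').2 (by simp)).symm hu.adj_last.symm
  have htu : G.dist t u = 1 := dist_eq_one_iff_adj.2 hu.adj_last.symm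
  have htw : t ≠ w := by
    rintro rfl
    have : v ∈ [u, a', b', c'] := (ht.2 v).1 hv.adj_last.symm
    grind [dist_eq_one_iff_adj.2 hvp, hvu.ne]
  have ha : IsNbhd G a [w, b, c, t] := isNbhd_of_length_eq h.regular
    (by grind [IsNbhd, hw.self_notMem]) (by grind [IsNbhd, SimpleGraph.adj_comm]) rfl
  have haa' : a = a' := by grind [IsNbhd]
  have : b' ∈ [w, b, c, t] := (ha.2 b').1 (haa' ▸ hab')
  grind [ht.self_notMem]

end IsQuarticNDB

end Clique

theorem not_adj_of_fan {V : Type*} {G : SimpleGraph V} {a b p q u v w : V}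
    (hv : IsNbhd G v [u, p, q, w]) (huq : G.Adj u q)
    (hw : IsNbhd G w [v, p, a, b]) (ha : G.dist a u = 3) (hb : G.dist b u = 3) : ¬ G.Adj w q := by
  intro hwq
  have : q ∈ [v, p, a, b] := (hw.2 q).1 hwq
  grind [hv.1, hv.self_notMem, dist_eq_one_iff_adj.2 huq.symm]

section Fan

variable {V : Type*} [Fintype V] {G : SimpleGraph V} [DecidableRel G.Adj]
  {a b c e f g k p q u v w y y' : V}

namespace IsQuarticNDB

theorem eq_of_dist_eq_three_of_common_adj_eq (h : IsQuarticNDB G 3) (huv : G.Adj u v)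
    (hc : ∀ s, G.Adj u s → G.Adj v s → s = c) (hy : G.dist y u = 3) (hyv : G.dist y v = 2)
    (hy' : G.dist y' u = 3) (hyv' : G.dist y' v = 2) : y = y' := by
  by_contra hne
  obtain ⟨s, hus, hvs, hs⟩ := h.exists_common_adj huv (l := [y, y']) (l' := [c])
    (by simpa using hne) (by simp [*]) (by simp)
  exact hs (by simp [hc s hus hvs])

theorem exists_isNbhd_of_adj_outer (h : IsQuarticNDB G 3) (hv : IsNbhd G v [u, p, q, w])
    (hup : G.Adj u p) (huq : G.Adj u q) (hpw : G.Adj p w) :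
    ∃ a b, IsNbhd G w [v, p, a, b] ∧ G.dist a u = 3 ∧ G.dist b u = 3 := by
  obtain ⟨a, hwa, hau, -⟩ := h.exists_adj_dist_eq_three hv hup huq v
  obtain ⟨b, hwb, hbu, hba⟩ := h.exists_adj_dist_eq_three hv hup huq a
  have := dist_eq_one_iff_adj.2 ((hv.2 u).2 (by simp))
  have := dist_eq_one_iff_adj.2 hup.symm
  refine ⟨a, b, isNbhd_of_length_eq h.regular ?_ ?_ rfl, hau, hbu⟩
  · grind [hv.self_notMem, hv.1]
  · grind [hv.adj_last.symm, hpw.symm]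

theorem exists_isNbhd_fan (h : IsQuarticNDB G 3) (hv : IsNbhd G v [u, p, q, w])
    (hup : G.Adj u p) (huq : G.Adj u q) (hpw : G.Adj p w) :
    ∃ c, IsNbhd G u [v, p, q, c] ∧ IsNbhd G p [u, v, w, c] := by
  obtain ⟨a, b, hw, hau, hbu⟩ := h.exists_isNbhd_of_adj_outer hv hup huq hpw
  have hvl : ∀ y ∈ [u, p, q, w], G.Adj v y := fun y => (hv.2 y).2
  have hfar : ∀ z, G.Adj w z → G.dist z u = 3 → G.dist z p = 2 := fun z hwz hzu =>
    dist_eq_two_of_dist_eq_three h.connected hzu hup hpw hwz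
  obtain ⟨c, huc, hpc, hcv⟩ := h.exists_common_adj hup (l := [a, b]) (l' := [v])
    (by grind [IsNbhd]) (by grind [IsNbhd]) (by simp)
  have hpq := h.not_adj_of_clique (hvl u (by simp)) (hvl p (by simp)) (hvl q (by simp)) hup huq
  have huw := h.not_adj_of_adj_adj hv hup huq
  refine ⟨c, isNbhd_of_length_eq h.regular ?_ ?_ rfl, isNbhd_of_length_eq h.regular ?_ ?_ rfl⟩
  all_goals grind [IsNbhd, SimpleGraph.adj_comm, G.irrefl]

theorem dist_eq_three_of_adj_of_fan (h : IsQuarticNDB G 3) (hv : IsNbhd G v [u, p, q, w])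
    (hu : IsNbhd G u [v, p, q, c]) (hp : IsNbhd G p [u, v, w, c]) (hq : IsNbhd G q [u, v, g, k])
    (hc : IsNbhd G c [u, p, e, f]) (he : G.dist e v = 3) (hf : G.dist f v = 3)
    (hw : IsNbhd G w [v, p, a, b]) (ha : G.dist a u = 3) (hb : G.dist b u = 3)
    (hpq : ¬ G.Adj p q) (hcq : ¬ G.Adj c q) (hwq : ¬ G.Adj w q) (hgy : G.Adj g y) (hyq : y ≠ q)
    (hyk : y ≠ k) :
    G.dist y u = 3 ∨ G.dist y v = 3 := by
  by_contra! hnear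
  have hvl : ∀ z ∈ [u, p, q, w], G.Adj v z := fun z => (hv.2 z).2
  have hul : ∀ z ∈ [v, p, q, c], G.Adj u z := fun z => (hu.2 z).2
  have hqg : G.Adj q g := (hq.2 g).2 (by simp)
  have hgu : G.dist g u ≤ 2 := dist_le_two h.connected hqg.symm (hul q (by simp)).symm
  have hgv : G.dist g v ≤ 2 := dist_le_two h.connected hqg.symm (hvl q (by simp)).symm
  have hug : ¬ G.Adj u g := fun hug => by
    have : g ∈ [v, p, q, c] := (hu.2 g).1 hug
    grind [hq.1, hqg.symm, hqg.ne]
  have hvg : ¬ G.Adj v g := fun hvg => by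
    have : g ∈ [u, p, q, w] := (hv.2 g).1 hvg
    grind [hq.1, hqg.symm, hqg.ne]
  have hpg : ¬ G.Adj p g := fun hpg => by
    have : g ∈ [u, v, w, c] := (hp.2 g).1 hpg
    grind [hq.1, hqg.symm]
  have hcg : ¬ G.Adj c g := fun hcg => by
    have : g ∈ [u, p, e, f] := (hc.2 g).1 hcg
    grind [hq.1, hqg.symm]
  have hwg : ¬ G.Adj w g := fun hwg => by
    have : g ∈ [v, p, a, b] := (hw.2 g).1 hwg
    grind [hq.1, hqg.symm]
  have huy : ¬ G.Adj u y := fun huy => by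
    have : y ∈ [v, p, q, c] := (hu.2 y).1 huy
    grind [hgy.symm]
  obtain rfl | hua | ⟨s, hus, hsy⟩ := h.eq_or_adj_or_exists_of_dist_ne_three hnear.1
  · exact hug hgy.symm
  · exact huy hua
  · have : s ∈ [v, p, q, c] := (hu.2 s).1 hus
    grind [hv.2 y, hp.2 y, hq.2 y, hc.2 y, hgy.symm, hgy.ne]

theorem exists_dist_ne_three_of_common_adj_eq (h : IsQuarticNDB G 3)
    (hq : IsNbhd G q [u, v, g, k]) (hu : ∀ s, G.Adj u s → G.Adj q s → s = v)
    (hv : ∀ s, G.Adj v s → G.Adj q s → s = u) :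
    ∃ y, (G.Adj g y ∧ y ≠ k ∨ G.Adj k y ∧ y ≠ g) ∧ y ≠ q ∧ G.dist y u ≠ 3 ∧ G.dist y v ≠ 3 := by
  by_contra! hfar
  have hql : ∀ y ∈ [u, v, g, k], G.Adj q y := fun y => (hq.2 y).2
  have huq := (hql u (by simp)).symm
  have hvq := (hql v (by simp)).symm
  have hmid : ∀ x ∈ [g, k], ∀ y, G.Adj x y → G.dist y u = 3 ∨ G.dist y v = 3 →
      G.dist y q = 2 := by
    rintro x hx y hxy (hyu | hyv)
    · exact dist_eq_two_of_dist_eq_three h.connected hyu huq (hql x (by grind)) hxy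
    · exact dist_eq_two_of_dist_eq_three h.connected hyv hvq (hql x (by grind)) hxy
  have huniq := fun y y' =>
    h.eq_of_dist_eq_three_of_common_adj_eq (c := v) (y := y) (y' := y') huq hu
  have huniq' := fun y y' =>
    h.eq_of_dist_eq_three_of_common_adj_eq (c := u) (y := y) (y' := y') hvq hv
  have hgk : G.Adj g k := by
    by_contra hgk
    obtain ⟨y₁, hgy₁, hy₁⟩ := exists_adj_notMem h.regular g (l := [q]) (by simp)
    obtain ⟨y₂, hgy₂, hy₂⟩ := exists_adj_notMem h.regular g (l := [q, y₁]) (by simp)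
    obtain ⟨y₃, hgy₃, hy₃⟩ := exists_adj_notMem h.regular g (l := [q, y₁, y₂]) (by simp)
    have := hmid g (by simp)
    grind
  obtain ⟨s, hgs, hsk, hks⟩ := h.isNDB.exists_adj_not_adj (by simp) h.connected hgk
  obtain ⟨y₁, hky₁, hy₁⟩ := exists_adj_notMem h.regular k (l := [q, g]) (by simp)
  obtain ⟨y₂, hky₂, hy₂⟩ := exists_adj_notMem h.regular k (l := [q, g, y₁]) (by simp)
  have hsq : s ≠ q := by grind [((hq.2 k).2 (by simp)).symm]
  have hs := hmid g (by simp) s hgs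
  have := hmid k (by simp)
  grind

theorem not_adj_outer (h : IsQuarticNDB G 3) (hv : IsNbhd G v [u, p, q, w])
    (hup : G.Adj u p) (huq : G.Adj u q) : ¬ G.Adj p w := by
  intro hpw
  obtain ⟨c, hu, hp⟩ := h.exists_isNbhd_fan hv hup huq hpw
  obtain ⟨a, b, hw, hau, hbu⟩ := h.exists_isNbhd_of_adj_outer hv hup huq hpw
  obtain ⟨e, f, hc, hev, hfv⟩ := h.exists_isNbhd_of_adj_outer hu (p := p) (q := q)
    ((hv.2 p).2 (by simp)) ((hv.2 q).2 (by simp)) ((hp.2 c).2 (by simp))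
  have hvl : ∀ y ∈ [u, p, q, w], G.Adj v y := fun y => (hv.2 y).2
  have hvq := hvl q (by simp)
  obtain ⟨g, k, hq⟩ := exists_isNbhd_of_two h.regular (v := q) (hvl u (by simp)).ne'
    huq.symm hvq.symm
  have hpq := h.not_adj_of_clique (hvl u (by simp)) (hvl p (by simp)) hvq hup huq
  have hwq := not_adj_of_fan hv huq hw hau hbu
  have hcq := not_adj_of_fan hu hvq hc hev hfv
  obtain ⟨y, hy, hyq, hyu, hyv⟩ := h.exists_dist_ne_three_of_common_adj_eq hq
    (fun s hus hqs => by grind [hu.2 s, hqs.symm, hqs.ne])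
    (fun s hvs hqs => by grind [hv.2 s, hqs.symm, hqs.ne])
  rcases hy with ⟨hgy, hyk⟩ | ⟨hky, hyg⟩
  · have := h.dist_eq_three_of_adj_of_fan hv hu hp hq hc hev hfv hw hau hbu hpq hcq hwq
      hgy hyq hyk
    tauto
  · have := h.dist_eq_three_of_adj_of_fan hv hu hp hq.swap_last hc hev hfv hw hau hbu hpq hcq hwq
      hky hyq hyg
    tauto

end IsQuarticNDB

end Fan

section CommonNeighbour

variable {V : Type*} [Fintype V] {G : SimpleGraph V} [DecidableRel G.Adj] {a b c p q r u v w x : V}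
  {l m : List V}

namespace IsQuarticNDB

theorem length_add_length_le_three (h : IsQuarticNDB G 3) (hwa : G.Adj w a) (hwv : G.Adj w v)
    (hm : m.Nodup) (hmw : ∀ z ∈ m, G.Adj w z ∧ z ≠ a ∧ ¬ G.Adj z a) (hl : l.Nodup)
    (hlv : ∀ y ∈ l, G.Adj v y ∧ G.dist y a = 3) : m.length + l.length ≤ 3 := by
  have hm1 : ∀ z ∈ m, G.dist z w = 1 := fun z hz => dist_eq_one_iff_adj.2 (hmw z hz).1.symm
  have hl2 : ∀ y ∈ l, G.dist y w = 2 := fun y hy =>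
    dist_eq_two_of_dist_eq_three h.connected (hlv y hy).2 hwa.symm hwv (hlv y hy).1
  have hW : ∀ x ∈ w :: (m ++ l), x ∈ ndbW G w a := by
    simp only [ndbW, mem_filter_univ, List.mem_cons, List.mem_append]
    rintro x (rfl | hx | hx)
    · simp [dist_eq_one_iff_adj.2 hwa]
    · rw [hm1 x hx]
      exact h.connected.one_lt_dist_of_ne_of_not_adj (hmw x hx).2.1 (hmw x hx).2.2
    · simp [hl2 x hx, (hlv x hx).2]
  have hcard := length_le_card_of_forall_mem ?_ hW
  · rw [(h.isNDB w a hwa).1] at hcard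
    simpa [Nat.lt_succ_iff] using hcard
  · have : w ∉ m := fun hwm => G.irrefl (hmw w hwm).1
    have : w ∉ l := fun hwl => by simpa using hl2 w hwl
    have : m.Disjoint l := fun x hxm hxl => by grind
    simp [List.nodup_append', *]

theorem dist_eq_three_or_of_common_adj_eq (h : IsQuarticNDB G 3) (hux : G.Adj u x)
    (hc : ∀ s, G.Adj u s → G.Adj x s → s = c) (hau : G.dist a u = 3) (hbu : G.dist b u = 3)
    (hba : b ≠ a) : G.dist x a = 3 ∨ G.dist x b = 3 := by
  by_contra! hx
  have hx2 : ∀ z, G.dist z u = 3 → G.dist x z ≠ 3 → G.dist z x = 2 := fun z hzu hxz => by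
    have := h.dist_le x z
    have := dist_le_dist_add_one h.connected hux z
    rw [SimpleGraph.dist_comm] at hzu ⊢
    omega
  exact hba (h.eq_of_dist_eq_three_of_common_adj_eq hux hc hbu (hx2 b hbu hx.2) hau
    (hx2 a hau hx.1))

theorem adj_of_dist_eq_three (h : IsQuarticNDB G 3) (hv : IsNbhd G v [u, p, q, w])
    (hw : IsNbhd G w [v, a, b, r]) (hau : G.dist a u = 3) :
    ¬ (G.dist p a = 3 ∧ G.dist q a = 3) ∧
      (G.dist p a = 3 ∨ G.dist q a = 3 → G.Adj a b ∧ G.Adj a r) := by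
  have hvl : ∀ y ∈ [u, p, q], G.Adj v y := by grind [IsNbhd]
  have hwl : ∀ y ∈ [v, a, b, r], G.Adj w y := fun y => (hw.2 y).2
  have hva : ¬ G.Adj v a := fun hva => by
    have := dist_le_two h.connected hva.symm (hvl u (by simp))
    omega
  rw [SimpleGraph.dist_comm] at hau
  have hlen := fun {m l} => h.length_add_length_le_three (m := m) (l := l) (hwl a (by simp))
    (hwl v (by simp))
  refine ⟨fun hpq => ?_, fun hpq => ?_⟩
  · have := hlen (m := [v]) (l := [u, p, q]) (by simp) (by grind [IsNbhd]) (by grind [IsNbhd])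
      (by grind)
    simp at this
  · obtain ⟨y, hy, hya⟩ : ∃ y ∈ [p, q], G.dist y a = 3 := by simpa using hpq
    have hadj : ∀ z ∈ [b, r], G.Adj a z := fun z hz => by
      by_contra haz
      have := hlen (m := [v, z]) (l := [u, y]) (by grind [IsNbhd])
        (by grind [IsNbhd, SimpleGraph.adj_comm]) (by grind [IsNbhd]) (by grind)
      simp at this
    exact ⟨hadj b (by simp), hadj r (by simp)⟩

theorem common_adj_unique (h : IsQuarticNDB G 3) (huv : G.Adj u v) (hup : G.Adj u p)
    (hvp : G.Adj v p) (huq : G.Adj u q) (hvq : G.Adj v q) : p = q := by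
  by_contra hpq
  obtain ⟨w, hv⟩ := exists_isNbhd_of_three h.regular (v := v) (a := u) (b := p) (c := q)
    (by grind [hup.ne, huq.ne]) (by grind [huv.symm])
  obtain ⟨c, hu⟩ := exists_isNbhd_of_three h.regular (v := u) (a := v) (b := p) (c := q)
    (by grind [hvp.ne, hvq.ne]) (by grind)
  have hnpq := h.not_adj_of_clique huv hup huq hvp hvq
  have hpc := h.not_adj_outer hu hvp hvq
  have hqc := h.not_adj_outer hu.swap_middle hvq hvp
  obtain ⟨a, hwa, hau, -⟩ := h.exists_adj_dist_eq_three hv hup huq v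
  obtain ⟨b, hwb, hbu, hba⟩ := h.exists_adj_dist_eq_three hv hup huq a
  have hvw := hv.adj_last
  have hnear : ∀ y ∈ [v, p, q], G.dist y u = 1 := by
    simp [dist_eq_one_iff_adj, huv.symm, hup.symm, huq.symm]
  obtain ⟨r, hw⟩ := exists_isNbhd_of_three h.regular (v := w) (a := v) (b := a) (c := b)
    (by grind) (by grind [hvw.symm])
  have hp : G.dist p a = 3 ∨ G.dist p b = 3 :=
    h.dist_eq_three_or_of_common_adj_eq hup (c := v) (fun s hus hps => by
      grind [hu.2 s, hps.symm, hps.ne]) hau hbu hba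
  have hq : G.dist q a = 3 ∨ G.dist q b = 3 :=
    h.dist_eq_three_or_of_common_adj_eq huq (c := v) (fun s hus hqs => by
      grind [hu.2 s, hqs.symm, hqs.ne]) hau hbu hba
  have ha := h.adj_of_dist_eq_three hv hw hau
  have hb := h.adj_of_dist_eq_three hv hw.swap_middle hbu
  obtain ⟨hab, har, hbr⟩ : G.Adj a b ∧ G.Adj a r ∧ G.Adj b r := by tauto
  exact h.not_adj_of_clique hwa hwb hw.adj_last hab har hbr

end IsQuarticNDB

end CommonNeighbour

section UniqueTriangle

variable {V : Type*} [Fintype V] {G : SimpleGraph V} [DecidableRel G.Adj] {u v x y z : V}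

namespace IsQuarticNDB

theorem card_dist_eq_three_eq_of_adj (h : IsQuarticNDB G 3) (huv : G.Adj u v) :
    (univ.filter fun z => G.dist z u = 3).card = (univ.filter fun z => G.dist z v = 3).card := by
  classical
  have hsplit : ∀ {u v}, G.Adj u v → (univ.filter fun z => G.dist z u = 3) =
      ndbD G u v 3 2 ∪ ndbD G u v 3 3 := fun {u v} huv => by
    ext z
    have := dist_le_dist_add_one h.connected huv z
    have := h.dist_le z v
    rw [SimpleGraph.dist_comm, SimpleGraph.dist_comm (u := v)] at *
    simp only [ndbD, mem_filter_univ, mem_union]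
    omega
  have hswap : ∀ i, ndbD G u v i i = ndbD G v u i i := fun i => by simp [ndbD, and_comm]
  have hdisj : ∀ u v, Disjoint (ndbD G u v 3 2) (ndbD G u v 3 3) :=
    fun u v => disjoint_filter.2 (by omega)
  rw [hsplit huv, hsplit huv.symm, card_union_of_disjoint (hdisj u v),
    card_union_of_disjoint (hdisj v u), h.card_ndbD_three_two huv, h.card_ndbD_three_two huv.symm,
    hswap, hswap]

theorem card_dist_eq_three_eq (h : IsQuarticNDB G 3) (u v : V) :
    (univ.filter fun z => G.dist z u = 3).card = (univ.filter fun z => G.dist z v = 3).card := by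
  obtain ⟨p⟩ := h.connected.preconnected u v
  induction p with
  | nil => rfl
  | cons hadj _ ih => exact (h.card_dist_eq_three_eq_of_adj hadj).trans ih

theorem eq_of_dist_eq_three (h : IsQuarticNDB G 3) (huv : G.Adj u v) (hy : G.dist y u = 3)
    (hyv : G.dist y v = 2) (hz : G.dist z u = 3) (hzv : G.dist z v = 2) : y = z := by
  obtain ⟨c, huc, hvc, -⟩ := h.exists_common_adj huv (l := [y]) (l' := []) (by simp)
    (by simp [hy, hyv]) (by simp)
  exact h.eq_of_dist_eq_three_of_common_adj_eq huv
    (fun s hus hvs => h.common_adj_unique huv hus hvs huc hvc) hy hyv hz hzv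

theorem dist_eq_three_of_forall_not_adj (h : IsQuarticNDB G 3) (huv : G.Adj u v)
    (hno : ∀ s, G.Adj u s → ¬ G.Adj v s) (hz : G.dist z u = 3) : G.dist z v = 3 := by
  have hzv : G.dist z v ≠ 2 := fun hzv => by
    obtain ⟨c, huc, hvc, -⟩ := h.exists_common_adj huv (l := [z]) (l' := []) (by simp)
      (by simp [hz, hzv]) (by simp)
    exact hno c huc hvc
  have := dist_le_dist_add_one h.connected huv z
  have := h.dist_le z v
  grind [SimpleGraph.dist_comm]

theorem exists_isNbhd_of_forall_not_adj (h : IsQuarticNDB G 3) (hzx : G.dist z x = 3)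
    (hxy : G.Adj x y) (hno : ∀ s, G.Adj x s → ¬ G.Adj y s) :
    ∃ p q w, IsNbhd G x [p, q, y, w] ∧ G.dist z p = 2 ∧ ∀ s, G.Adj x s → ¬ G.Adj w s := by
  obtain ⟨p, hxp, hpz⟩ := exists_adj_dist_add_one_eq h.connected (u := x) (v := z) (by grind)
  have hzp : G.dist z p = 2 := by
    rw [SimpleGraph.dist_comm] at hzx ⊢
    omega
  have hzy := h.dist_eq_three_of_forall_not_adj hxy hno hzx
  obtain ⟨q, hxq, hpq, -⟩ := h.exists_common_adj hxp (l := [z]) (l' := []) (by simp)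
    (by simp [hzx, hzp]) (by simp)
  have := hno p hxp
  obtain ⟨w, hx⟩ := exists_isNbhd_of_three h.regular (v := x) (a := p) (b := q) (c := y)
    (by grind [hpq.ne, SimpleGraph.adj_comm]) (by grind)
  refine ⟨p, q, w, hx, hzp, fun s hxs hws => ?_⟩
  have : s ∈ [p, q, y, w] := (hx.2 s).1 hxs
  have := h.common_adj_unique hxp (p := q) (q := w) hxq hpq hx.adj_last
  have := h.common_adj_unique hxq (p := p) (q := w) hxp hpq.symm hx.adj_last
  have := hno w hx.adj_last
  grind [hx.1, hws.ne, hws.symm]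

theorem exists_common_adj_of_dist_eq_three (h : IsQuarticNDB G 3) (hzu : G.dist z u = 3)
    (hxy : G.Adj x y) : ∃ c, G.Adj x c ∧ G.Adj y c := by
  by_contra! hno
  obtain ⟨a, ha⟩ : ∃ a, G.dist a x = 3 := by
    have : 0 < (univ.filter fun a => G.dist a x = 3).card := by
      rw [← h.card_dist_eq_three_eq u]
      exact card_pos.2 ⟨z, by simpa using hzu⟩
    simpa [card_pos, Finset.Nonempty] using this
  obtain ⟨p, q, w, hx, hap, hnow⟩ := h.exists_isNbhd_of_forall_not_adj ha hxy hno
  have hxl : ∀ s ∈ [p, q, y, w], G.Adj x s := fun s => (hx.2 s).2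
  have hnear : ∀ b, G.dist b x = 3 → b ≠ a → G.dist b q = 2 := fun b hb hba => by
    obtain ⟨s, hxs, hs⟩ := exists_adj_dist_add_one_eq h.connected (u := x) (v := b) (by grind)
    rw [SimpleGraph.dist_comm, SimpleGraph.dist_comm (u := x)] at hs
    have : s ∈ [p, q, y, w] := (hx.2 s).1 hxs
    have := h.dist_eq_three_of_forall_not_adj hxy hno hb
    have := h.dist_eq_three_of_forall_not_adj hx.adj_last hnow hb
    have := h.eq_of_dist_eq_three (hxl p (by simp)) hb (z := a)
    grind
  have hthree : 3 ≤ (univ.filter fun b => G.dist b x = 3).card := by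
    rw [h.card_dist_eq_three_eq x a]
    refine length_le_card_of_forall_mem (l := [x, y, w]) ?_ ?_
    · grind [hx.1, hx.self_notMem]
    · have := h.dist_eq_three_of_forall_not_adj hxy hno ha
      have := h.dist_eq_three_of_forall_not_adj hx.adj_last hnow ha
      simp [SimpleGraph.dist_comm (v := a), *]
  obtain ⟨b, hb, hba⟩ := exists_mem_notMem_of_length_lt_card (l := [a])
    (lt_of_lt_of_le (by simp) hthree)
  obtain ⟨c, hc, hcl⟩ := exists_mem_notMem_of_length_lt_card (l := [a, b])
    (lt_of_lt_of_le (by simp) hthree)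
  rw [mem_filter_univ] at hb hc
  have := h.eq_of_dist_eq_three (hxl q (by simp)) hb (hnear b hb (by simpa using hba)) hc
    (hnear c hc (by grind))
  grind

end IsQuarticNDB

end UniqueTriangle

section Antipodal

variable {V : Type*} [Fintype V] {G : SimpleGraph V} [DecidableRel G.Adj] {k m u v w x y z : V}

namespace IsQuarticNDB

theorem dist_eq_two_of_common_adj (h : IsQuarticNDB G 3) (hzx : G.dist z x = 3) (hzm : G.Adj z m)
    (hmx : G.dist m x = 2) (hzk : G.Adj z k) (hmk : G.Adj m k) : G.dist k x = 2 := by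
  rw [SimpleGraph.dist_comm] at hmx
  obtain ⟨y, hxy, hym⟩ := exists_adj_adj_of_dist_eq_two h.connected hmx
  have hzy := dist_eq_two_of_dist_eq_three h.connected hzx hxy hym hzm.symm
  have hk : G.dist k x ≠ 3 := fun hk => hzk.ne <| h.eq_of_dist_eq_three hxy hzx hzy hk <|
    dist_eq_two_of_dist_eq_three h.connected hk hxy hym hmk
  have := dist_le_dist_add_one h.connected hzk x
  have := h.dist_le k x
  omega

theorem exists_ne_dist_eq_two (h : IsQuarticNDB G 3) (hzx : G.dist z x = 3) :
    ∃ y y', y ≠ y' ∧ (G.Adj x y ∧ G.dist z y = 2) ∧ G.Adj x y' ∧ G.dist z y' = 2 := by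
  obtain ⟨m, hzm, hmx⟩ := exists_adj_dist_add_one_eq h.connected (u := z) (v := x) (by grind)
  replace hmx : G.dist m x = 2 := by omega
  obtain ⟨k, hzk, hmk⟩ := h.exists_common_adj_of_dist_eq_three hzx hzm
  have hkx := h.dist_eq_two_of_common_adj hzx hzm hmx hzk hmk
  rw [SimpleGraph.dist_comm] at hmx hkx
  obtain ⟨y, hxy, hym⟩ := exists_adj_adj_of_dist_eq_two h.connected hmx
  obtain ⟨y', hxy', hyk⟩ := exists_adj_adj_of_dist_eq_two h.connected hkx
  refine ⟨y, y', ?_, ⟨hxy, dist_eq_two_of_dist_eq_three h.connected hzx hxy hym hzm.symm⟩, hxy',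
    dist_eq_two_of_dist_eq_three h.connected hzx hxy' hyk hzk.symm⟩
  rintro rfl
  obtain rfl := h.common_adj_unique hmk hzm.symm hzk.symm hym.symm hyk.symm
  rw [dist_eq_one_iff_adj.2 hxy.symm] at hzx
  omega

/-- Vertices far from `z` are close to disjoint pairs of neighbours of `z`, and `z` has only four
neighbours. -/
theorem dist_ne_three_of_pairwise_ne (h : IsQuarticNDB G 3) (huv : u ≠ v) (huw : u ≠ w)
    (hvw : v ≠ w) (hu : G.dist u z = 3) (hv : G.dist v z = 3) : G.dist w z ≠ 3 := by
  intro hw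
  obtain ⟨a, a', ha⟩ := h.exists_ne_dist_eq_two hu
  obtain ⟨b, b', hb⟩ := h.exists_ne_dist_eq_two hv
  obtain ⟨c, c', hc⟩ := h.exists_ne_dist_eq_two hw
  have hdisj : ∀ {s t p q}, s ≠ t → G.dist s z = 3 → G.dist t z = 3 → G.Adj z p → G.dist s p = 2 →
      G.dist t q = 2 → p ≠ q := fun hne hs ht hzp hsp htq hpq =>
    hne (h.eq_of_dist_eq_three hzp hs hsp ht (hpq ▸ htq))
  have := length_le_of_forall_adj h.regular (v := z) (l := [a, a', b, b', c, c']) (by grind)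
    (by grind)
  simp at this

theorem dist_eq_two_of_adj (h : IsQuarticNDB G 3) (hzx : G.dist z x = 3) (hxy : G.Adj x y) :
    G.dist z y = 2 := by
  by_contra hzy
  obtain ⟨c, hxc, hyc⟩ := h.exists_common_adj_of_dist_eq_three hzx hxy
  have hzy' := dist_le_dist_add_one h.connected hxy z
  have hzc' := dist_le_dist_add_one h.connected hxc z
  have := h.dist_le z c
  have := h.dist_le z y
  rw [SimpleGraph.dist_comm] at hzx
  by_cases hzc : G.dist z c = 2
  · have := h.dist_eq_two_of_common_adj hzx hxc (SimpleGraph.dist_comm.trans hzc) hxy hyc.symm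
    grind [SimpleGraph.dist_comm]
  · exact h.dist_ne_three_of_pairwise_ne hxy.ne hxc.ne hyc.ne hzx (by grind [SimpleGraph.dist_comm])
      (by grind [SimpleGraph.dist_comm])

theorem eq_of_dist_eq_three_of_dist_eq_three (h : IsQuarticNDB G 3) (hy : G.dist y x = 3)
    (hz : G.dist z x = 3) : y = z := by
  obtain ⟨c, hxc, -⟩ := exists_adj_notMem h.regular x (l := []) (by simp)
  exact h.eq_of_dist_eq_three hxc hy (h.dist_eq_two_of_adj hy hxc) hz (h.dist_eq_two_of_adj hz hxc)

end IsQuarticNDB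

end Antipodal

/-- An antipodal frame: `z` is far from the base vertex `x`, and each neighbour `y` of `x` spans,
with `m y` adjacent to `z` and `e y` at distance two from both `x` and `z`, the triangle through `y`
that avoids `x`. -/
structure IsAntipodalFrame {V : Type*} (G : SimpleGraph V) (x z : V) (m e : V → V) : Prop where
  dist_eq_three : G.dist z x = 3
  adj_mid {y : V} (hxy : G.Adj x y) : G.Adj y (m y)
  adj_equator {y : V} (hxy : G.Adj x y) : G.Adj y (e y)
  mid_adj_equator {y : V} (hxy : G.Adj x y) : G.Adj (m y) (e y)
  mid_adj_far {y : V} (hxy : G.Adj x y) : G.Adj (m y) z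
  not_equator_adj_base {y : V} (hxy : G.Adj x y) : ¬ G.Adj (e y) x
  not_equator_adj_far {y : V} (hxy : G.Adj x y) : ¬ G.Adj (e y) z

namespace IsAntipodalFrame

section Basic

variable {V : Type*} {G : SimpleGraph V} {m e : V → V} {x y z : V}

theorem not_base_adj_far (hf : IsAntipodalFrame G x z m e) : ¬ G.Adj x z := fun hxz => by
  have := hf.dist_eq_three
  rw [dist_eq_one_iff_adj.2 hxz.symm] at this
  omega

theorem not_adj_far (hf : IsAntipodalFrame G x z m e) (hc : G.Connected) (hxy : G.Adj x y) :
    ¬ G.Adj y z := fun hyz => by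
  have := dist_le_two hc hyz.symm hxy.symm
  have := hf.dist_eq_three
  omega

theorem equator_ne_base (hf : IsAntipodalFrame G x z m e) (hc : G.Connected) (hxy : G.Adj x y) :
    e y ≠ x := fun hex => by
  have := dist_le_two hc (hf.mid_adj_far hxy).symm (hex ▸ hf.mid_adj_equator hxy)
  have := hf.dist_eq_three
  omega

end Basic

variable {V : Type*} [Fintype V] {G : SimpleGraph V} [DecidableRel G.Adj] {m e : V → V}
  {a b c c' w x y y' z : V}

theorem _root_.IsQuarticNDB.exists_isAntipodalFrame (h : IsQuarticNDB G 3) (hzx : G.dist z x = 3) :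
    ∃ m e, IsAntipodalFrame G x z m e := by
  have hxz : ¬ G.Adj x z := fun hxz => by
    rw [dist_eq_one_iff_adj.2 hxz.symm] at hzx
    omega
  have hex : ∀ y, ∃ p q, G.Adj x y → G.Adj y p ∧ G.Adj y q ∧ G.Adj p q ∧ G.Adj p z ∧
      ¬ G.Adj q x ∧ ¬ G.Adj q z := fun y => by
    by_cases hxy : G.Adj x y
    · have hyz := h.dist_eq_two_of_adj hzx hxy
      rw [SimpleGraph.dist_comm] at hyz
      obtain ⟨p, hyp, hpz⟩ := exists_adj_adj_of_dist_eq_two h.connected hyz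
      obtain ⟨q, hyq, hpq⟩ := h.exists_common_adj_of_dist_eq_three hzx hyp
      refine ⟨p, q, fun _ => ⟨hyp, hyq, hpq, hpz, fun hqx => ?_, fun hqz => ?_⟩⟩
      · exact hxz (h.common_adj_unique hyq hxy.symm hqx hyp hpq.symm ▸ hpz)
      · exact hxz (h.common_adj_unique hpq hyp.symm hyq.symm hpz hqz ▸ hxy)
    · exact ⟨y, y, fun hxy' => absurd hxy' hxy⟩
  choose m e hme using hex
  exact ⟨m, e, hzx, fun hxy => (hme _ hxy).1, fun hxy => (hme _ hxy).2.1,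
    fun hxy => (hme _ hxy).2.2.1, fun hxy => (hme _ hxy).2.2.2.1,
    fun hxy => (hme _ hxy).2.2.2.2.1, fun hxy => (hme _ hxy).2.2.2.2.2⟩

theorem isNbhd (hf : IsAntipodalFrame G x z m e) (h : IsQuarticNDB G 3) (hxy : G.Adj x y)
    (hxy' : G.Adj x y') (hyy' : G.Adj y y') : IsNbhd G y [x, y', m y, e y] := by
  refine isNbhd_of_length_eq h.regular ?_ ?_ rfl
  · grind [hxy'.ne, (hf.mid_adj_equator hxy).ne, hf.equator_ne_base h.connected hxy,
      hf.not_equator_adj_base hxy, hf.not_base_adj_far, hf.mid_adj_far hxy,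
      hf.not_adj_far h.connected hxy', SimpleGraph.adj_comm]
  · grind [hf.adj_mid hxy, hf.adj_equator hxy, SimpleGraph.adj_comm]

theorem exists_eq_mid (hf : IsAntipodalFrame G x z m e) (h : IsQuarticNDB G 3) (hzw : G.Adj z w) :
    ∃ y, G.Adj x y ∧ w = m y := by
  have hxw := h.dist_eq_two_of_adj (SimpleGraph.dist_comm.trans hf.dist_eq_three) hzw
  obtain ⟨y, hxy, hyw⟩ := exists_adj_adj_of_dist_eq_two h.connected hxw
  obtain ⟨y', hxy', hyy'⟩ := h.exists_common_adj_of_dist_eq_three hf.dist_eq_three hxy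
  have : w ∈ [x, y', m y, e y] := ((hf.isNbhd h hxy hxy' hyy').2 w).1 hyw
  grind [hf.not_base_adj_far, hf.not_equator_adj_far hxy, hf.not_adj_far h.connected hxy',
    SimpleGraph.adj_comm]

theorem exists_eq_equator (hf : IsAntipodalFrame G x z m e) (h : IsQuarticNDB G 3) (hwx : w ≠ x)
    (hwz : w ≠ z) (hxw : ¬ G.Adj x w) (hzw : ¬ G.Adj z w) : ∃ y, G.Adj x y ∧ w = e y := by
  obtain rfl | hxw' | ⟨y, hxy, hyw⟩ := h.eq_or_adj_or_exists_of_dist_ne_three fun hw =>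
    hwz (h.eq_of_dist_eq_three_of_dist_eq_three hw hf.dist_eq_three)
  · exact absurd rfl hwx
  · exact absurd hxw' hxw
  obtain ⟨y', hxy', hyy'⟩ := h.exists_common_adj_of_dist_eq_three hf.dist_eq_three hxy
  have : w ∈ [x, y', m y, e y] := ((hf.isNbhd h hxy hxy' hyy').2 w).1 hyw
  grind [hf.mid_adj_far hxy, SimpleGraph.adj_comm]

theorem equator_eq_of_adj (hf : IsAntipodalFrame G x z m e) (h : IsQuarticNDB G 3)
    (hxy : G.Adj x y) (hxc : G.Adj x c) (hyc : G.Adj y (e c)) : e c = e y := by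
  obtain ⟨y', hxy', hyy'⟩ := h.exists_common_adj_of_dist_eq_three hf.dist_eq_three hxy
  have : e c ∈ [x, y', m y, e y] := ((hf.isNbhd h hxy hxy' hyy').2 _).1 hyc
  grind [hf.equator_ne_base h.connected hxc, hf.not_equator_adj_base hxc,
    hf.not_equator_adj_far hxc, hf.mid_adj_far hxy, hf.not_adj_far h.connected hxc,
    SimpleGraph.adj_comm]

theorem isNbhd_mid (hf : IsAntipodalFrame G x z m e) (h : IsQuarticNDB G 3) (hxy : G.Adj x y)
    (hyk : G.Adj (m y) k) (hzk : G.Adj z k) : IsNbhd G (m y) [z, k, y, e y] := by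
  refine isNbhd_of_length_eq h.regular ?_ ?_ rfl
  · grind [hf.mid_adj_far hxy, hf.not_adj_far h.connected hxy, hf.not_equator_adj_far hxy,
      hf.adj_equator hxy, hzk.ne, (hf.adj_equator hxy).ne, SimpleGraph.adj_comm]
  · grind [hf.mid_adj_far hxy, hf.mid_adj_equator hxy, hf.adj_mid hxy, SimpleGraph.adj_comm]

theorem eq_or_adj_of_mid_adj (hf : IsAntipodalFrame G x z m e) (h : IsQuarticNDB G 3)
    (hxy : G.Adj x y) (hw : G.Adj (m y) w) : w = z ∨ G.Adj z w ∨ w = y ∨ w = e y := by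
  obtain ⟨k, hyk, hzk⟩ :=
    h.exists_common_adj_of_dist_eq_three hf.dist_eq_three (hf.mid_adj_far hxy)
  have : w ∈ [z, k, y, e y] := ((hf.isNbhd_mid h hxy hyk hzk).2 w).1 hw
  grind

theorem eq_of_mid_eq (hf : IsAntipodalFrame G x z m e) (h : IsQuarticNDB G 3) (hxy : G.Adj x y)
    (hxc : G.Adj x c) (hm : m c = m y) : c = y := by
  have := hf.eq_or_adj_of_mid_adj h hxy (hm ▸ (hf.adj_mid hxc).symm)
  grind [hf.not_base_adj_far, hf.not_adj_far h.connected hxc, hf.not_equator_adj_base hxy,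
    SimpleGraph.adj_comm]

theorem equator_eq_of_mid_adj (hf : IsAntipodalFrame G x z m e) (h : IsQuarticNDB G 3)
    (hxy : G.Adj x y) (hxc : G.Adj x c) (hyc : G.Adj (m y) (e c)) : e c = e y := by
  have := hf.eq_or_adj_of_mid_adj h hxy hyc
  grind [hf.not_equator_adj_base hxc, hf.not_equator_adj_far hxc, hf.adj_equator hxc,
    hf.not_adj_far h.connected hxc, SimpleGraph.adj_comm]

/-- The vertices other than `x` and `z` fall into three layers: neighbours of `x`, neighbours
of `z`, and vertices `e c`. -/
theorem exists_of_equator_adj (hf : IsAntipodalFrame G x z m e) (h : IsQuarticNDB G 3)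
    (hxy : G.Adj x y) (hw : G.Adj (e y) w) :
    (∃ c, G.Adj x c ∧ e c = e y ∧ (w = c ∨ w = m c)) ∨ ∃ c, G.Adj x c ∧ w = e c := by
  by_cases hxw : G.Adj x w
  · exact .inl ⟨w, hxw, (hf.equator_eq_of_adj h hxw hxy hw.symm).symm, .inl rfl⟩
  by_cases hzw : G.Adj z w
  · obtain ⟨c, hxc, rfl⟩ := hf.exists_eq_mid h hzw
    exact .inl ⟨c, hxc, (hf.equator_eq_of_mid_adj h hxc hxy hw.symm).symm, .inr rfl⟩
  refine .inr (hf.exists_eq_equator h ?_ ?_ hxw hzw)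
  · rintro rfl
    exact hf.not_equator_adj_base hxy hw
  · rintro rfl
    exact hf.not_equator_adj_far hxy hw

theorem isNbhd_equator_of_ne (hf : IsAntipodalFrame G x z m e) (h : IsQuarticNDB G 3)
    (hxy : G.Adj x y) (hxa : G.Adj x a) (hxb : G.Adj x b) (hab : e a ≠ e b)
    (hya : G.Adj (e y) (e a)) (hyb : G.Adj (e y) (e b)) : IsNbhd G (e y) [y, m y, e a, e b] := by
  refine isNbhd_of_length_eq h.regular ?_ ?_ rfl
  · grind [(hf.adj_mid hxy).ne, hf.not_equator_adj_base hxa, hf.not_equator_adj_base hxb,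
      hf.not_equator_adj_far hxa, hf.not_equator_adj_far hxb, hf.mid_adj_far hxy,
      SimpleGraph.adj_comm]
  · grind [hf.adj_equator hxy, hf.mid_adj_equator hxy, SimpleGraph.adj_comm]

theorem exists_triangle_equator (hf : IsAntipodalFrame G x z m e) (h : IsQuarticNDB G 3)
    (hxy : G.Adj x y) (hne : ∀ c, G.Adj x c → c ≠ y → e c ≠ e y) :
    ∃ a b, G.Adj x a ∧ G.Adj x b ∧ G.Adj (e y) (e a) ∧ G.Adj (e y) (e b) ∧ G.Adj (e a) (e b) := by
  have heq : ∀ w, G.Adj (e y) w → w ≠ y → w ≠ m y → ∃ c, G.Adj x c ∧ w = e c :=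
    fun w hw hwy hwm => by
      obtain ⟨c, hxc, hc, hwc⟩ | hc := hf.exists_of_equator_adj h hxy hw
      · grind
      · exact hc
  obtain ⟨p, hp, hpl⟩ := exists_adj_notMem h.regular (e y) (l := [y, m y]) (by simp)
  obtain ⟨a, hxa, rfl⟩ := heq p hp (by grind) (by grind)
  obtain ⟨q, hq, haq⟩ := h.exists_common_adj_of_dist_eq_three hf.dist_eq_three hp
  obtain ⟨b, hxb, rfl⟩ := heq q hq (fun hqy => hp.ne (hf.equator_eq_of_adj h hxy hxa
    (hqy ▸ haq.symm)).symm) (fun hqm => hp.ne (hf.equator_eq_of_mid_adj h hxy hxa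
    (hqm ▸ haq.symm)).symm)
  exact ⟨a, b, hxa, hxb, hp, hq, haq⟩

theorem exists_ne_equator_eq (hf : IsAntipodalFrame G x z m e) (h : IsQuarticNDB G 3)
    (hxy : G.Adj x y) : ∃ c, G.Adj x c ∧ c ≠ y ∧ e c = e y := by
  by_contra! hne
  obtain ⟨a, b, hxa, hxb, hya, hyb, hab⟩ := hf.exists_triangle_equator h hxy hne
  have hey := hf.isNbhd_equator_of_ne h hxy hxa hxb hab.ne hya hyb
  have hea := hf.isNbhd_equator_of_ne h hxa hxy hxb hyb.ne hya.symm hab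
  have heb := hf.isNbhd_equator_of_ne h hxb hxy hxa hya.ne hyb.symm hab.symm
  obtain ⟨d, hx⟩ := exists_isNbhd_of_three h.regular (v := x) (a := y) (b := a) (c := b)
    (by grind [hab.ne, hya.ne, hyb.ne]) (by grind)
  have hxd := hx.adj_last
  have hmd : e d ∉ [e y, e a, e b] := fun hmem => by
    have hd := (hf.adj_equator hxd).symm
    have : d ∉ [e y, e a, e b] := by
      grind [hf.not_equator_adj_base hxy, hf.not_equator_adj_base hxa, hf.not_equator_adj_base hxb,
        SimpleGraph.adj_comm]
    have := hf.not_adj_far h.connected hxd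
    have := hea.2 d
    have := heb.2 d
    grind [hx.1, hf.mid_adj_far hxa, hf.mid_adj_far hxb]
  obtain ⟨w, hw, hwl⟩ := exists_adj_notMem h.regular (e d) (l := [d, m d]) (by simp)
  obtain ⟨c, hxc, hc, hwc⟩ | ⟨c, hxc, rfl⟩ := hf.exists_of_equator_adj h hxd hw
  · grind [hx.2 c]
  · have : c ∈ [y, a, b, d] := (hx.2 c).1 hxc
    have := hey.2 (e d)
    have := hea.2 (e d)
    have := heb.2 (e d)
    grind [hw.ne, hw.symm, hxy.symm, hxa.symm, hxb.symm, hf.not_equator_adj_base hxd,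
      hf.not_equator_adj_far hxd, hf.mid_adj_far hxy, hf.mid_adj_far hxa, hf.mid_adj_far hxb]

theorem isNbhd_equator_of_eq (hf : IsAntipodalFrame G x z m e) (h : IsQuarticNDB G 3)
    (hxy : G.Adj x y) (hxc : G.Adj x c) (hyc : y ≠ c) (hec : e c = e y) :
    IsNbhd G (e y) [y, m y, c, m c] := by
  refine isNbhd_of_length_eq h.regular ?_ ?_ rfl
  · grind [hf.eq_of_mid_eq h hxc hxy, hf.mid_adj_far hxy, hf.mid_adj_far hxc,
      hf.not_adj_far h.connected hxy, hf.not_adj_far h.connected hxc]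
  · grind [hf.adj_equator hxy, hf.adj_equator hxc, hf.mid_adj_equator hxy, hf.mid_adj_equator hxc,
      SimpleGraph.adj_comm]

theorem isNbhd_far (hf : IsAntipodalFrame G x z m e) (h : IsQuarticNDB G 3)
    (hx : IsNbhd G x [y, y', c, c']) : IsNbhd G z [m y, m y', m c, m c'] := by
  have hxl : ∀ s ∈ [y, y', c, c'], G.Adj x s := fun s => (hx.2 s).2
  refine isNbhd_of_length_eq h.regular (l := [y, y', c, c'].map m) ?_ ?_ rfl
  · exact hx.1.map_on fun a ha b hb hab => hf.eq_of_mid_eq h (hxl b hb) (hxl a ha) hab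
  · simpa using fun a ha => (hf.mid_adj_far (hxl a ha)).symm

theorem equator_ne_of_adj (hf : IsAntipodalFrame G x z m e) (h : IsQuarticNDB G 3)
    (hxy : G.Adj x y) (hxy' : G.Adj x y') (hyy' : G.Adj y y') : e y ≠ e y' := fun he =>
  hf.equator_ne_base h.connected hxy <| h.common_adj_unique hyy' (hf.adj_equator hxy)
    (he ▸ hf.adj_equator hxy') hxy.symm hxy'.symm

theorem exists_isNbhd_base (hf : IsAntipodalFrame G x z m e) (h : IsQuarticNDB G 3) :
    ∃ y y' c c', IsNbhd G x [y, y', c, c'] ∧ G.Adj y y' ∧ G.Adj c c' ∧ e c = e y ∧ e c' = e y' := by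
  obtain ⟨y, hxy, -⟩ := exists_adj_notMem h.regular x (l := []) (by simp)
  obtain ⟨y', hxy', hyy'⟩ := h.exists_common_adj_of_dist_eq_three hf.dist_eq_three hxy
  have hne := hf.equator_ne_of_adj h hxy hxy' hyy'
  obtain ⟨a, haa, hay, hea⟩ := hf.exists_ne_equator_eq h hxy
  obtain ⟨b, hbb, hby, heb⟩ := hf.exists_ne_equator_eq h hxy'
  have hx : IsNbhd G x [y, y', a, b] :=
    isNbhd_of_length_eq h.regular (by grind) (by grind) rfl
  obtain ⟨s, hxs, has⟩ := h.exists_common_adj_of_dist_eq_three hf.dist_eq_three haa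
  have : s ∈ [y, y', a, b] := (hx.2 s).1 hxs
  have := h.common_adj_unique hxy (p := y') (q := a) hxy' hyy' haa
  have := h.common_adj_unique hxy' (p := y) (q := a) hxy hyy'.symm haa
  exact ⟨y, y', a, b, hx, hyy', by grind [has.ne, has.symm], hea, heb⟩

theorem dist_mid_eq_three (hf : IsAntipodalFrame G x z m e) (h : IsQuarticNDB G 3)
    (hx : IsNbhd G x [y, y', c, c']) (hyy' : G.Adj y y') (hc : e c = e y) (hc' : e c' = e y') :
    G.dist (m c') y = 3 := by
  have hxl : ∀ s ∈ [y, y', c, c'], G.Adj x s := fun s => (hx.2 s).2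
  have hxy := hxl y (by simp)
  have hxy' := hxl y' (by simp)
  have hxc := hxl c (by simp)
  obtain ⟨w, hw, -⟩ := h.exists_dist_eq_three hyy' (l := [x]) (l' := []) (by simp)
    (by simp [hxy.symm, hxy'.symm]) (by simp)
  have hnot : ∀ s, G.Adj y s → w ≠ s ∧ ¬ G.Adj s w := fun s hys => by
    have := dist_eq_one_iff_adj.2 hys.symm
    refine ⟨by grind, fun hsw => ?_⟩
    have := dist_le_two h.connected hsw.symm hys.symm
    omega
  have hwx := hnot x hxy.symm
  have hwy' := hnot y' hyy'
  have hwm := hnot (m y) (hf.adj_mid hxy)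
  have hwe := hnot (e y) (hf.adj_equator hxy)
  have hzw : G.Adj z w := by
    by_contra hzw
    obtain ⟨d, hxd, rfl⟩ := hf.exists_eq_equator h hwx.1
      (fun hwz => hwm.2 (hwz ▸ hf.mid_adj_far hxy)) hwx.2 hzw
    have : d ∈ [y, y', c, c'] := (hx.2 d).1 hxd
    grind [hf.adj_equator hxy']
  obtain ⟨d, hxd, rfl⟩ := hf.exists_eq_mid h hzw
  have : d ∈ [y, y', c, c'] := (hx.2 d).1 hxd
  grind [hf.adj_mid hxy', hf.mid_adj_equator hxc, SimpleGraph.adj_comm]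

theorem mid_adj_mid (hf : IsAntipodalFrame G x z m e) (h : IsQuarticNDB G 3)
    (hx : IsNbhd G x [y, y', c, c']) (hyy' : G.Adj y y') (hc : e c = e y) (hc' : e c' = e y') :
    G.Adj (m y) (m y') := by
  have hxl : ∀ s ∈ [y, y', c, c'], G.Adj x s := fun s => (hx.2 s).2
  have hxy := hxl y (by simp)
  have hxc := hxl c (by simp)
  obtain ⟨k, hyk, hzk⟩ :=
    h.exists_common_adj_of_dist_eq_three hf.dist_eq_three (hf.mid_adj_far hxy)
  obtain ⟨d, hxd, rfl⟩ := hf.exists_eq_mid h hzk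
  have hfar := hf.dist_mid_eq_three h hx hyy' hc hc'
  have hdc' : d ≠ c' := by
    rintro rfl
    have := dist_le_two h.connected hyk.symm (hf.adj_mid hxy).symm
    omega
  have hdc : d ≠ c := by
    rintro rfl
    refine hf.not_adj_far h.connected hxy ?_
    rw [h.common_adj_unique hyk (hf.mid_adj_far hxy) hzk.symm (hf.mid_adj_equator hxy)
      (hc ▸ hf.mid_adj_equator hxc)]
    exact hf.adj_equator hxy
  have : d ∈ [y, y', c, c'] := (hx.2 d).1 hxd
  grind [hyk.ne]

end IsAntipodalFrame

section Labelling

variable {V W : Type*} {G : SimpleGraph V} {H : SimpleGraph W} {nbr : W → List W} {f : W → V}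

theorem surjective_of_isNbhd_map [Nonempty W] (hc : G.Connected)
    (hf : ∀ w, IsNbhd G (f w) ((nbr w).map f)) : Function.Surjective f := fun v => by
  obtain ⟨w⟩ := ‹Nonempty W›
  obtain ⟨p⟩ := hc.preconnected v (f w)
  generalize hu : f w = u at p
  induction p with
  | nil => exact ⟨w, hu⟩
  | cons hadj _ ih =>
    obtain ⟨i, rfl⟩ := ih hu
    obtain ⟨j, -, hj⟩ := List.mem_map.1 (((hf i).2 _).1 hadj.symm)
    exact ⟨j, hj⟩

theorem nonempty_iso_of_isNbhd_map [Nonempty W] (hc : G.Connected) (hH : ∀ w, IsNbhd H w (nbr w))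
    (hinj : Function.Injective f) (hf : ∀ w, IsNbhd G (f w) ((nbr w).map f)) :
    Nonempty (G ≃g H) := by
  have hbij : Function.Bijective f := ⟨hinj, surjective_of_isNbhd_map hc hf⟩
  refine ⟨(RelIso.mk (Equiv.ofBijective f hbij) fun {w w'} => ?_).symm⟩
  rw [Equiv.ofBijective_apply, Equiv.ofBijective_apply, (hf w).2, (hH w).2,
    List.mem_map_of_injective hinj]

end Labelling

section Cube

/-- The twelve edges of the cube, in the order used by `cubeNbr`: the first edge, its four
neighbours, the six edges at distance two from it, and the opposite edge. -/
def cubeEdge : Fin 12 → Sym2 (Fin 3 → Bool) :=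
  ![s(![false, false, false], ![true, false, false]),
    s(![false, false, false], ![false, true, false]),
    s(![false, false, false], ![false, false, true]),
    s(![true, false, false], ![true, true, false]),
    s(![true, false, false], ![true, false, true]),
    s(![false, true, false], ![false, true, true]),
    s(![false, false, true], ![false, true, true]),
    s(![true, true, false], ![true, true, true]),
    s(![true, false, true], ![true, true, true]),
    s(![false, true, false], ![true, true, false]),
    s(![false, false, true], ![true, false, true]),
    s(![false, true, true], ![true, true, true])]

/-- The lists of (indices of) edges sharing an endpoint with a given edge of the cube. -/
def cubeNbr : Fin 12 → List (Fin 12) :=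
  ![[1, 2, 3, 4], [0, 2, 5, 9], [0, 1, 6, 10], [0, 4, 7, 9], [0, 3, 8, 10], [11, 6, 1, 9],
    [11, 5, 2, 10], [11, 8, 3, 9], [11, 7, 4, 10], [1, 5, 3, 7], [2, 6, 4, 8], [5, 6, 7, 8]]

instance : DecidableRel cubeQ3.Adj := by
  unfold cubeQ3
  infer_instance

theorem cubeEdge_mem_edgeSet : ∀ i, cubeEdge i ∈ cubeQ3.edgeSet := by
  decide +kernel

theorem cubeEdge_injective : Function.Injective cubeEdge := by
  decide +kernel

theorem exists_cubeEdge_eq : ∀ s ∈ cubeQ3.edgeSet, ∃ i, cubeEdge i = s := by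
  decide +kernel

theorem mem_cubeNbr_iff : ∀ i j, cubeEdge i ≠ cubeEdge j ∧ (∃ v, v ∈ cubeEdge i ∧ v ∈ cubeEdge j) ↔
    j ∈ cubeNbr i := by
  decide +kernel

/-- The labelling of the vertices of the line graph of the cube by `Fin 12`. -/
noncomputable def cubeEdgeEquiv : Fin 12 ≃ cubeQ3.edgeSet :=
  Equiv.ofBijective (fun i => ⟨cubeEdge i, cubeEdge_mem_edgeSet i⟩)
    ⟨fun _ _ hij => cubeEdge_injective (congrArg Subtype.val hij), fun s =>
      (exists_cubeEdge_eq s s.2).imp fun _ => Subtype.ext⟩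

theorem isNbhd_cubeNbr (i : Fin 12) :
    IsNbhd (cubeQ3.lineGraph.comap cubeEdgeEquiv) i (cubeNbr i) := by
  refine ⟨by revert i; decide +kernel, fun j => ?_⟩
  rw [comap_adj, lineGraph_adj_iff_exists, ne_eq, Subtype.ext_iff]
  exact mem_cubeNbr_iff i j

end Cube

namespace IsAntipodalFrame

variable {V : Type*} [Fintype V] {G : SimpleGraph V} [DecidableRel G.Adj] {m e : V → V}
  {c c' x y y' z : V}

theorem nodup_layers (hf : IsAntipodalFrame G x z m e) (h : IsQuarticNDB G 3)
    (hx : IsNbhd G x [y, y', c, c']) (hyy' : G.Adj y y') :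
    [x, y, y', c, c', m y, m y', m c, m c', e y, e y', z].Nodup := by
  have hz := hf.isNbhd_far h hx
  have hxl : ∀ s ∈ [y, y', c, c'], G.Adj x s := fun s => (hx.2 s).2
  have hxy := hxl y (by simp)
  have hxy' := hxl y' (by simp)
  have hbase : x ≠ z ∧ x ∉ [m y, m y', m c, m c'] := by
    grind [hz.2 x, hf.not_base_adj_far, hf.dist_eq_three, SimpleGraph.adj_comm]
  have hnbr : ∀ s ∈ [y, y', c, c'], s ≠ z ∧ s ∉ [m y, m y', m c, m c'] := fun s hs => by
    grind [hz.2 s, hf.not_base_adj_far, hf.not_adj_far h.connected (hxl s hs),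
      SimpleGraph.adj_comm]
  have hequator : ∀ s ∈ [y, y'], e s ≠ x ∧ e s ≠ z ∧ e s ∉ [y, y', c, c'] ∧
      e s ∉ [m y, m y', m c, m c'] := fun s hs => by
    have hxs : G.Adj x s := by grind
    grind [hx.2 (e s), hz.2 (e s), hf.equator_ne_base h.connected hxs, hf.adj_equator hxs,
      hf.not_adj_far h.connected hxs, hf.not_equator_adj_base hxs, hf.not_equator_adj_far hxs,
      SimpleGraph.adj_comm]
  have hee' := hf.equator_ne_of_adj h hxy hxy' hyy'
  have hx_nodup := List.nodup_cons.2 ⟨hx.self_notMem, hx.1⟩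
  have hz_nodup := List.nodup_cons.2 ⟨hz.self_notMem, hz.1⟩
  simp only [List.nodup_cons, List.mem_cons, List.not_mem_nil, or_false, not_or,
    forall_eq_or_imp, forall_eq] at hbase hnbr hequator hx_nodup hz_nodup ⊢
  grind

theorem exists_isNbhd_map_cubeNbr (hf : IsAntipodalFrame G x z m e) (h : IsQuarticNDB G 3) :
    ∃ f : Fin 12 → V, Function.Injective f ∧ ∀ i, IsNbhd G (f i) ((cubeNbr i).map f) := by
  obtain ⟨y, y', c, c', hx, hyy', hcc', hec, hec'⟩ := hf.exists_isNbhd_base h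
  have hxl : ∀ s ∈ [y, y', c, c'], G.Adj x s := fun s => (hx.2 s).2
  have hxy := hxl y (by simp)
  have hxy' := hxl y' (by simp)
  have hxc := hxl c (by simp)
  have hxc' := hxl c' (by simp)
  have hm := hf.mid_adj_mid h hx hyy' hec hec'
  have hm' := hf.mid_adj_mid h hx.swap_middle.swap_first.swap_last.swap_middle hcc' hec.symm
    hec'.symm
  have hy := hf.isNbhd h hxy hxy' hyy'
  have hy' := hf.isNbhd h hxy' hxy hyy'.symm
  have hc := hf.isNbhd h hxc hxc' hcc'
  have hc' := hf.isNbhd h hxc' hxc hcc'.symm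
  have hmy := hf.isNbhd_mid h hxy hm (hf.mid_adj_far hxy').symm
  have hmy' := hf.isNbhd_mid h hxy' hm.symm (hf.mid_adj_far hxy).symm
  have hmc := hf.isNbhd_mid h hxc hm' (hf.mid_adj_far hxc').symm
  have hmc' := hf.isNbhd_mid h hxc' hm'.symm (hf.mid_adj_far hxc).symm
  have he := hf.isNbhd_equator_of_eq h hxy hxc (by grind [hx.1]) hec
  have he' := hf.isNbhd_equator_of_eq h hxy' hxc' (by grind [hx.1]) hec'
  have hz := hf.isNbhd_far h hx
  rw [hec] at hc hmc
  rw [hec'] at hc' hmc'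
  refine ⟨![x, y, y', c, c', m y, m y', m c, m c', e y, e y', z], ?_, fun i => ?_⟩
  · exact List.nodup_ofFn.1 (hf.nodup_layers h hx hyy')
  · fin_cases i
    exacts [hx, hy, hy', hc, hc', hmy, hmy', hmc, hmc', he, he', hz]

end IsAntipodalFrame

theorem IsQuarticNDB.nonempty_iso_cubeQ3_lineGraph {V : Type*} [Fintype V] {G : SimpleGraph V}
    [DecidableRel G.Adj] {x z : V} (h : IsQuarticNDB G 3) (hzx : G.dist z x = 3) :
    Nonempty (G ≃g cubeQ3.lineGraph) := by
  obtain ⟨m, e, hf⟩ := h.exists_isAntipodalFrame hzx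
  obtain ⟨f, hinj, hnbr⟩ := hf.exists_isNbhd_map_cubeNbr h
  obtain ⟨φ⟩ := nonempty_iso_of_isNbhd_map h.connected isNbhd_cubeNbr hinj hnbr
  exact ⟨φ.trans (Iso.comap cubeEdgeEquiv _)⟩

/-- A regular NDB graph with valency `4`, diameter `d ≥ 3` and
`γ = d + 1` is isomorphic to the line graph of the 3-dimensional hypercube
graph `Q₃` (vertices of the line graph are the edges of `Q₃`, two of them
being adjacent iff they share an endpoint). -/
theorem stmt_17 {V : Type*} [Fintype V] (G : SimpleGraph V) [DecidableRel G.Adj]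
    (hconn : G.Connected) (d : ℕ) (hreg : G.IsRegularOfDegree 4)
    (hd : 3 ≤ d) (hdiam : HasDiam G d) (hndb : IsNDB G (d + 1)) :
    Nonempty (G ≃g cubeQ3.lineGraph) := by
  obtain ⟨hle, u, v, huv⟩ := hdiam
  have h : IsQuarticNDB G d := ⟨hconn, hreg, hndb, hle⟩
  obtain ⟨f, -, -, hf⟩ := exists_isGeodesic hconn u v
  rw [huv] at hf
  obtain rfl : d = 3 := le_antisymm (h.diam_le_three hf) hd
  exact h.nonempty_iso_cubeQ3_lineGraph huv
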